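/- arXiv:2605.17411 — 11 statements merged into one kernel-verified Lean document; each statement's English description precedes it below -/
import Mathlib

section
/- Let G be a countable commutative group and let u be a free Schur ultrafilter on G. Then every U ∈ u is a Schur subset of G. -/
/-- An ultrafilter is *free* if it contains no finite set. -/
def IsFreeUltrafilter {X : Type*} (u : Ultrafilter X) : Prop :=
  ∀ A ∈ u, ¬ A.Finite

/-- An ultrafilter `u` on an additive semigroup is *Schur* if for each `U ∈ u`
there exist `a, b ∈ U` with `a + b ∈ U`. -/
def IsSchurUltrafilter {S : Type*} [Add S] (u : Ultrafilter S) : Prop :=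
  ∀ U ∈ u, ∃ a ∈ U, ∃ b ∈ U, a + b ∈ U

/-- A subset `A` of a commutative group `G` is *Schur* if for every `r, k : ℕ` there
is a finite subset `X ⊆ A` such that for every `r`-coloring there exist `a ∈ X` and a
`k`-element subset `B ⊆ X` with `a + B ⊆ X` such that the coloring is constant on
`{a} ∪ B ∪ (a + B)`. -/
def IsSchurSet {G : Type*} [AddCommGroup G] (A : Set G) : Prop :=
  ∀ r k : ℕ, ∃ X : Finset G, (X : Set G) ⊆ A ∧
    ∀ c : G → Fin r, ∃ a ∈ X, ∃ B : Finset G,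
      B ⊆ X ∧ B.card = k ∧ (∀ b ∈ B, a + b ∈ X) ∧
      (∀ b ∈ B, c b = c a) ∧ (∀ b ∈ B, c (a + b) = c a)

/-!
If a set `V ∈ u` contained no element `a` together with a `k`-element set `B` and its translate
`a + B`, then each `a ∈ V` would have fewer than `k` partners `b ∈ V` with `a + b ∈ V`. Joining
every `a ∈ V` to its partners and to `a + a` gives a graph with an orientation of bounded
out-degree; such a graph is degenerate, hence finitely colorable, so `u` contains an independent
set. If `a`, `b` and `a + b` lie in it, then `b = a` and `a + a = a`, so `a = 0`; this contradicts
`u` being free and Schur. Given a coloring of `U ∈ u`, take for `V` the color class that belongs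
to `u`; compactness then replaces `U` by a finite subset.
-/

open Finset

theorem exists_finset_forall_coloring {α κ : Type*} [Finite κ] {P : Set α → Prop}
    (hmono : ∀ ⦃S T : Set α⦄, S ⊆ T → P S → P T)
    (hfin : ∀ S, P S → ∃ t : Finset α, (t : Set α) ⊆ S ∧ P t)
    {A : Set α} (hA : ∀ c : α → κ, ∃ i, P (A ∩ c ⁻¹' {i})) :
    ∃ X : Finset α, (X : Set α) ⊆ A ∧ ∀ c : α → κ, ∃ i, P (X ∩ c ⁻¹' {i}) := by
  classical
  by_contra! hbad
  have hbad_inter (s : Finset α) :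
      ∃ c : α → κ, ∀ i, ¬ P (({x ∈ s | x ∈ A} : Finset α) ∩ c ⁻¹' {i}) :=
    hbad _ fun x hx => (mem_filter.1 hx).2
  choose C hC using hbad_inter
  obtain ⟨c, hc⟩ := Finset.rado_selection C
  obtain ⟨i, hi⟩ := hA c
  obtain ⟨t, htA, ht⟩ := hfin _ hi
  obtain ⟨s, hts, hcs⟩ := hc t
  refine hC s i (hmono (fun x hx => ⟨?_, ?_⟩) ht)
  · exact mem_filter.2 ⟨hts hx, (htA hx).1⟩
  · exact (hcs x hx).symm.trans (htA hx).2

theorem exists_fiber_mem_ultrafilter {α κ : Type*} [Finite κ] (u : Ultrafilter α) (c : α → κ) :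
    ∃ i, c ⁻¹' {i} ∈ u :=
  Ultrafilter.eventually_exists_iff.1 (.of_forall fun x => ⟨c x, rfl⟩)

section Degenerate

variable {V : Type*} {G : SimpleGraph V} {d n k : ℕ}

open scoped Classical in
/-- A graph is `d`-degenerate if each of its finite nonempty induced subgraphs has a vertex of
degree at most `d`. This is what greedy coloring with `d + 1` colors requires. -/
def IsDegenerate (G : SimpleGraph V) (d : ℕ) : Prop :=
  ∀ s : Finset V, s.Nonempty → ∃ v ∈ s, #{w ∈ s | G.Adj v w} ≤ d

theorem IsDegenerate.exists_coloring_finset (hG : IsDegenerate G d) (s : Finset V) :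
    ∃ c : V → Fin (d + 1), ∀ v ∈ s, ∀ w ∈ s, G.Adj v w → c v ≠ c w := by
  classical
  induction s using Finset.strongInduction with
  | H s ih =>
    rcases s.eq_empty_or_nonempty with rfl | hs
    · exact ⟨fun _ => 0, by simp⟩
    obtain ⟨v, hvs, hdeg⟩ := hG s hs
    obtain ⟨c, hc⟩ := ih (s.erase v) (erase_ssubset hvs)
    obtain ⟨i, hi⟩ : ∃ i, i ∉ image c {w ∈ s | G.Adj v w} := by
      have hcard : #(image c {w ∈ s | G.Adj v w}) < Fintype.card (Fin (d + 1)) := by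
        simpa using Nat.lt_succ_of_le (card_image_le.trans hdeg)
      simpa using exists_mem_notMem_of_card_lt_card hcard
    have hunused : ∀ w ∈ s, G.Adj v w → c w ≠ i := fun w hw hvw hcw =>
      hi (mem_image.2 ⟨w, mem_filter.2 ⟨hw, hvw⟩, hcw⟩)
    refine ⟨Function.update c v i, fun a ha b hb hab => ?_⟩
    by_cases hav : a = v
    · subst hav
      simpa [hab.ne'] using (hunused b hb hab).symm
    by_cases hbv : b = v
    · subst hbv
      simpa [hav] using hunused a ha hab.symm
    simpa [hav, hbv] using
      hc a (mem_erase.2 ⟨hav, ha⟩) b (mem_erase.2 ⟨hbv, hb⟩) hab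

theorem colorable_of_forall_finset
    (h : ∀ s : Finset V, ∃ c : V → Fin n, ∀ v ∈ s, ∀ w ∈ s, G.Adj v w → c v ≠ c w) :
    G.Colorable n := by
  classical
  by_contra hG
  let HasEdge (S : Set V) : Prop := ∃ v ∈ S, ∃ w ∈ S, G.Adj v w
  have hmono ⦃S T : Set V⦄ (hST : S ⊆ T) : HasEdge S → HasEdge T :=
    fun ⟨v, hv, w, hw, hvw⟩ => ⟨v, hST hv, w, hST hw, hvw⟩
  have hfin (S : Set V) : HasEdge S → ∃ t : Finset V, (t : Set V) ⊆ S ∧ HasEdge t :=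
    fun ⟨v, hv, w, hw, hvw⟩ =>
      ⟨{v, w}, by simp [Set.insert_subset_iff, hv, hw], v, by simp, w, by simp, hvw⟩
  have hmonochromatic (c : V → Fin n) : ∃ i, HasEdge (Set.univ ∩ c ⁻¹' {i}) := by
    by_contra! hc
    exact hG ⟨.mk c fun {v w} hvw hcvw =>
      hc (c v) ⟨v, ⟨trivial, rfl⟩, w, ⟨trivial, hcvw.symm⟩, hvw⟩⟩
  obtain ⟨X, -, hX⟩ := exists_finset_forall_coloring hmono hfin hmonochromatic
  obtain ⟨c, hc⟩ := h X
  obtain ⟨i, v, ⟨hv, hvi⟩, w, ⟨hw, hwi⟩, hvw⟩ := hX c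
  exact hc v hv w hw hvw (hvi.trans hwi.symm)

theorem IsDegenerate.colorable (hG : IsDegenerate G d) : G.Colorable (d + 1) :=
  colorable_of_forall_finset hG.exists_coloring_finset

open scoped Classical in
theorem exists_inDegree_le_of_outDegree_le {r : V → V → Prop} {s : Finset V} (hs : s.Nonempty)
    (hr : ∀ a ∈ s, #{b ∈ s | r a b} ≤ k) : ∃ b ∈ s, #{a ∈ s | r a b} ≤ k := by
  refine exists_le_of_sum_le hs ?_
  calc ∑ b ∈ s, #{a ∈ s | r a b}
      = ∑ a ∈ s, #{b ∈ s | r a b} :=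
        (sum_card_bipartiteAbove_eq_sum_card_bipartiteBelow r).symm
    _ ≤ ∑ _a ∈ s, k := sum_le_sum hr

theorem isDegenerate_of_outDegree_le {r : V → V → Prop}
    (hG : ∀ v w, G.Adj v w → r v w ∨ r w v) (hr : ∀ v, {w | r v w}.encard ≤ k) :
    IsDegenerate G (2 * k) := by
  classical
  intro s hs
  have hout (v : V) : #{w ∈ s | r v w} ≤ k := by
    rw [← Nat.cast_le (α := ℕ∞), ← Set.encard_coe_eq_coe_finsetCard]
    exact (Set.encard_le_encard fun w hw => (mem_filter.1 hw).2).trans (hr v)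
  obtain ⟨v, hvs, hin⟩ := exists_inDegree_le_of_outDegree_le hs fun w _ => hout w
  refine ⟨v, hvs, ?_⟩
  calc #{w ∈ s | G.Adj v w}
      ≤ #{w ∈ s | r v w ∨ r w v} :=
        card_le_card (monotone_filter_right s fun w _ hvw => hG v w hvw)
    _ = #({w ∈ s | r v w} ∪ {w ∈ s | r w v}) := by rw [filter_or]
    _ ≤ #{w ∈ s | r v w} + #{w ∈ s | r w v} := card_union_le _ _
    _ ≤ 2 * k := by linarith [hout v]

theorem exists_isIndepSet_mem_ultrafilter (hG : G.Colorable n) (u : Ultrafilter V) :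
    ∃ A ∈ u, G.IsIndepSet A := by
  obtain ⟨c⟩ := hG
  obtain ⟨i, hi⟩ := exists_fiber_mem_ultrafilter u c
  exact ⟨c.colorClass i, hi, c.isIndepSet_colorClass i⟩

end Degenerate

section SchurConfiguration

/-- `S` contains an element `a`, a `k`-element set `B` and its translate `a + B`. A subset of a
commutative group is Schur when finitely many of its points suffice to find such a configuration
in some color class of every finite coloring. -/
def HasSchurConfiguration {M : Type*} [Add M] (S : Set M) (k : ℕ) : Prop :=
  ∃ a ∈ S, ∃ B : Finset M, #B = k ∧ ∀ b ∈ B, b ∈ S ∧ a + b ∈ S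

namespace HasSchurConfiguration

variable {M : Type*} [Add M] {S T : Set M} {k : ℕ}

theorem mono (hST : S ⊆ T) : HasSchurConfiguration S k → HasSchurConfiguration T k :=
  fun ⟨a, ha, B, hBk, hB⟩ => ⟨a, hST ha, B, hBk, fun b hb => (hB b hb).imp (@hST _) (@hST _)⟩

theorem exists_finset_subset (hS : HasSchurConfiguration S k) :
    ∃ t : Finset M, (t : Set M) ⊆ S ∧ HasSchurConfiguration (t : Set M) k := by
  classical
  obtain ⟨a, ha, B, hBk, hB⟩ := hS
  refine ⟨insert a (B ∪ B.image (a + ·)), ?_, a, by simp, B, hBk, fun b hb => ⟨by simp [hb], ?_⟩⟩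
  · simp only [coe_insert, coe_union, coe_image, Set.insert_subset_iff, Set.union_subset_iff,
      Set.image_subset_iff]
    exact ⟨ha, fun b hb => (hB b hb).1, fun b hb => (hB b hb).2⟩
  · exact mem_insert_of_mem (mem_union_right _ (mem_image_of_mem _ hb))

theorem of_le_encard {a : M} (ha : a ∈ S) (hk : k ≤ {b ∈ S | a + b ∈ S}.encard) :
    HasSchurConfiguration S k := by
  obtain ⟨B, hBS, hBk⟩ := Set.exists_subset_encard_eq hk
  lift B to Finset M using Set.finite_of_encard_eq_coe hBk
  rw [Set.encard_coe_eq_coe_finsetCard, Nat.cast_inj] at hBk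
  exact ⟨a, ha, B, hBk, fun b hb => hBS hb⟩

end HasSchurConfiguration

theorem isSchurSet_of_forall_coloring {G : Type*} [AddCommGroup G] {A : Set G}
    (hA : ∀ r k : ℕ, ∀ c : G → Fin r, ∃ i, HasSchurConfiguration (A ∩ c ⁻¹' {i}) k) :
    IsSchurSet A := by
  intro r k
  obtain ⟨X, hXA, hX⟩ := exists_finset_forall_coloring
    (fun _ _ => HasSchurConfiguration.mono) (fun _ => HasSchurConfiguration.exists_finset_subset)
    (hA r k)
  refine ⟨X, hXA, fun c => ?_⟩
  obtain ⟨i, a, ⟨haX, rfl⟩, B, hBk, hB⟩ := hX c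
  exact ⟨a, haX, B, fun b hb => (hB b hb).1.1, hBk, fun b hb => (hB b hb).2.1,
    fun b hb => (hB b hb).1.2, fun b hb => (hB b hb).2.2⟩

theorem hasSchurConfiguration_of_mem_ultrafilter {M : Type*} [AddLeftCancelMonoid M]
    {u : Ultrafilter M} (hfree : IsFreeUltrafilter u) (hschur : IsSchurUltrafilter u)
    {V : Set M} (hV : V ∈ u) (k : ℕ) : HasSchurConfiguration V k := by
  by_contra hVk
  let r (a b : M) : Prop := a ∈ V ∧ (b = a + a ∨ b ∈ V ∧ a + b ∈ V)
  have hr (a : M) : {b | r a b}.encard ≤ (k + 1 : ℕ) := by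
    by_cases ha : a ∈ V
    · have hpartners : {b ∈ V | a + b ∈ V}.encard ≤ k :=
        le_of_not_ge fun hk => hVk (.of_le_encard ha hk)
      calc {b | r a b}.encard
          ≤ (insert (a + a) {b ∈ V | a + b ∈ V}).encard := Set.encard_le_encard fun b hb => hb.2
        _ ≤ {b ∈ V | a + b ∈ V}.encard + 1 := Set.encard_insert_le _ _
        _ ≤ (k + 1 : ℕ) := by push_cast; gcongr
    · simp [r, ha]
  have hdegenerate : IsDegenerate (SimpleGraph.fromRel r) (2 * (k + 1)) :=
    isDegenerate_of_outDegree_le (fun _ _ hab => hab.2) hr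
  obtain ⟨A, hAu, hA⟩ := exists_isIndepSet_mem_ultrafilter hdegenerate.colorable u
  have hzero : ({0}ᶜ : Set M) ∈ u :=
    Ultrafilter.compl_mem_iff_notMem.2 fun h => hfree _ h (Set.finite_singleton 0)
  obtain ⟨a, ⟨⟨haV, haA⟩, ha0⟩, b, ⟨⟨hbV, hbA⟩, -⟩, ⟨habV, habA⟩, -⟩ :=
    hschur _ (Filter.inter_mem (Filter.inter_mem hV hAu) hzero)
  have eq_of_rel {x : M} (hx : x ∈ A) (hax : r a x) : a = x :=
    by_contra fun hne => hA haA hx hne ⟨hne, .inl hax⟩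
  obtain rfl : a = b := eq_of_rel hbA ⟨haV, .inr ⟨hbV, habV⟩⟩
  exact ha0 (left_eq_add.1 (eq_of_rel habA ⟨haV, .inl rfl⟩))

end SchurConfiguration

theorem mem_free_schur_ultrafilter_isSchurSet_general {G : Type*} [AddCommGroup G]
    (u : Ultrafilter G) (hfree : IsFreeUltrafilter u) (hschur : IsSchurUltrafilter u) :
    ∀ U ∈ u, IsSchurSet U := by
  intro U hU
  refine isSchurSet_of_forall_coloring fun r k c => ?_
  obtain ⟨i, hi⟩ := exists_fiber_mem_ultrafilter u c
  exact ⟨i, hasSchurConfiguration_of_mem_ultrafilter hfree hschur (Filter.inter_mem hU hi) k⟩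

/-- Every element of a free Schur ultrafilter on a countable commutative group
is a Schur set. -/
theorem mem_free_schur_ultrafilter_isSchurSet {G : Type*} [AddCommGroup G] [Countable G]
    (u : Ultrafilter G) (hfree : IsFreeUltrafilter u) (hschur : IsSchurUltrafilter u) :
    ∀ U ∈ u, IsSchurSet U :=
  mem_free_schur_ultrafilter_isSchurSet_general u hfree hschur
end

section
/- Let G be a commutative group, let A ⊆ G be a Schur subset, and let B ⊆ G be a subset such that A \ B is finite. Then B is a Schur subset of G. -/
/-!
Refine a given coloring by giving each of the finitely many elements of `A \ B` a color of its own.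
In a pattern `{a} ∪ S ∪ (a + S)` that is monochromatic for the refined coloring, an element of
`A \ B` would have to be the only element of the pattern, which is impossible once `S` has at least
two elements. So the whole pattern lies in `B`, and it is monochromatic for the given coloring.
-/

section IsolatingColoring

variable {α κ : Type*} [DecidableEq α] {F : Finset α} {c : α → κ} {x y : α}

/-- The refinement of the coloring `c` in which every element of `F` receives a new color of its
own; the new colors are the elements of `F` themselves. -/
def isolatingColoring (F : Finset α) (c : α → κ) (x : α) : κ ⊕ F :=
  if h : x ∈ F then Sum.inr ⟨x, h⟩ else Sum.inl (c x)

theorem eq_of_isolatingColoring_eq_of_mem (hx : x ∈ F)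
    (h : isolatingColoring F c y = isolatingColoring F c x) : y = x := by
  grind [isolatingColoring]

theorem notMem_and_eq_of_isolatingColoring_eq_of_notMem (hx : x ∉ F)
    (h : isolatingColoring F c y = isolatingColoring F c x) : y ∉ F ∧ c y = c x := by
  grind [isolatingColoring]

end IsolatingColoring

/-- The finite set `X` contains a pattern `{a} ∪ S ∪ (a + S)` with `|S| = k` that is monochromatic
for `c`. This is the condition on colorings in `IsSchurSet`, with an arbitrary type of colors. -/
def HasMonochromaticPattern {G κ : Type*} [Add G] (c : G → κ) (X : Finset G) (k : ℕ) : Prop :=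
  ∃ a ∈ X, ∃ S : Finset G, S ⊆ X ∧ S.card = k ∧ (∀ b ∈ S, a + b ∈ X) ∧
    (∀ b ∈ S, c b = c a) ∧ (∀ b ∈ S, c (a + b) = c a)

namespace HasMonochromaticPattern

variable {G κ : Type*} [Add G] {X : Finset G} {c : G → κ} {k l : ℕ}

theorem of_le (hkl : k ≤ l) (h : HasMonochromaticPattern c X l) :
    HasMonochromaticPattern c X k := by
  obtain ⟨a, ha, S, hSX, rfl, hadd, hcol, hcol_add⟩ := h
  obtain ⟨T, hTS, hT⟩ := Finset.exists_subset_card_eq hkl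
  exact ⟨a, ha, T, hTS.trans hSX, hT, fun b hb => hadd b (hTS hb),
    fun b hb => hcol b (hTS hb), fun b hb => hcol_add b (hTS hb)⟩

theorem of_comp_injective {κ' : Type*} {f : κ → κ'} (hf : f.Injective)
    (h : HasMonochromaticPattern (f ∘ c) X k) : HasMonochromaticPattern c X k := by
  obtain ⟨a, ha, S, hSX, hS, hadd, hcol, hcol_add⟩ := h
  exact ⟨a, ha, S, hSX, hS, hadd, fun b hb => hf (hcol b hb), fun b hb => hf (hcol_add b hb)⟩

theorem sdiff_of_isolatingColoring [DecidableEq G] {F : Finset G} (hk : 1 < k)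
    (h : HasMonochromaticPattern (isolatingColoring F c) X k) :
    HasMonochromaticPattern c (X \ F) k := by
  obtain ⟨a, ha, S, hSX, rfl, hadd, hcol, hcol_add⟩ := h
  have haF : a ∉ F := fun haF => by
    obtain ⟨b, hb, hba⟩ := Finset.exists_mem_ne hk a
    exact hba (eq_of_isolatingColoring_eq_of_mem haF (hcol b hb))
  have hS : ∀ b ∈ S, b ∉ F ∧ c b = c a := fun b hb =>
    notMem_and_eq_of_isolatingColoring_eq_of_notMem haF (hcol b hb)
  have haS : ∀ b ∈ S, a + b ∉ F ∧ c (a + b) = c a := fun b hb =>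
    notMem_and_eq_of_isolatingColoring_eq_of_notMem haF (hcol_add b hb)
  exact ⟨a, Finset.mem_sdiff.2 ⟨ha, haF⟩, S,
    fun b hb => Finset.mem_sdiff.2 ⟨hSX hb, (hS b hb).1⟩, rfl,
    fun b hb => Finset.mem_sdiff.2 ⟨hadd b hb, (haS b hb).1⟩,
    fun b hb => (hS b hb).2, fun b hb => (haS b hb).2⟩

end HasMonochromaticPattern

theorem IsSchurSet.exists_finset_forall_hasMonochromaticPattern {G : Type*} [AddCommGroup G]
    {A : Set G} (hA : IsSchurSet A) (κ : Type*) [Finite κ] (k : ℕ) :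
    ∃ X : Finset G, (X : Set G) ⊆ A ∧ ∀ c : G → κ, HasMonochromaticPattern c X k := by
  obtain ⟨r, ⟨e⟩⟩ := Finite.exists_equiv_fin κ
  obtain ⟨X, hXA, hX⟩ := hA r k
  exact ⟨X, hXA, fun c => .of_comp_injective e.injective (hX (e ∘ c))⟩

/-- If `A` is a Schur subset of a commutative group `G` and `B ⊆ G` satisfies that
`A \ B` is finite, then `B` is a Schur subset of `G`. -/
theorem isSchurSet_of_almost_superset {G : Type*} [AddCommGroup G]
    (A B : Set G) (hA : IsSchurSet A) (hAB : (A \ B).Finite) :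
    IsSchurSet B := by
  classical
  intro r k
  let F : Finset G := hAB.toFinset
  obtain ⟨X, hXA, hX⟩ :=
    hA.exists_finset_forall_hasMonochromaticPattern (Fin r ⊕ F) (max k 2)
  have hXB : ((X \ F : Finset G) : Set G) ⊆ B := by
    rw [Finset.coe_sdiff, hAB.coe_toFinset, Set.sdiff_subset_comm]
    exact Set.sdiff_subset_sdiff_left hXA
  have pattern (c : G → Fin r) : HasMonochromaticPattern c (X \ F) k :=
    .of_le (le_max_left k 2)
      (.sdiff_of_isolatingColoring (le_max_right k 2) (hX (isolatingColoring F c)))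
  exact ⟨X \ F, hXB, pattern⟩
end

section
/- Let G be a countable commutative group and let A ⊆ G be a Schur subset. Then for every partition A = X ⊔ Y into two disjoint sets, either X is a Schur subset of G or Y is a Schur subset of G. -/
/-!
If no member `X i` of a finite cover of `A` is Schur, each fails for some parameters `r i`, `k i`.
Take `Z ⊆ A` finite witnessing the Schur property of `A` for a large enough number of colors and
`k = max k i`, and let `c i` be a bad `r i`-coloring of `Z ∩ X i`. Color `z ∈ Z` by recording, for
every `i`, both whether `z ∈ X i` and the color `c i z`. A monochromatic configuration for this
coloring lies inside a single `X i` and is monochromatic for `c i`, a contradiction.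
-/

/-- The finite set `X` contains a configuration `{a} ∪ B ∪ (a + B)` with `B.card = k` on which
the coloring `c` is constant. Colors are taken in an arbitrary type, so that colorings can be
combined without numbering the colors. -/
def HasMonoSchurConfig {G κ : Type*} [Add G] (c : G → κ) (k : ℕ) (X : Finset G) : Prop :=
  ∃ a ∈ X, ∃ B : Finset G, B ⊆ X ∧ B.card = k ∧ (∀ b ∈ B, a + b ∈ X) ∧
    (∀ b ∈ B, c b = c a) ∧ (∀ b ∈ B, c (a + b) = c a)

namespace HasMonoSchurConfig

variable {G κ : Type*} [Add G] {c : G → κ} {k : ℕ} {X : Finset G}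

theorem mono {l : ℕ} {Y : Finset G} (h : HasMonoSchurConfig c k X) (hlk : l ≤ k) (hXY : X ⊆ Y) :
    HasMonoSchurConfig c l Y := by
  obtain ⟨a, ha, B, hBX, hBk, haB, hcB, hcaB⟩ := h
  obtain ⟨B', hB'B, hB'l⟩ := Finset.exists_subset_card_eq (hlk.trans_eq hBk.symm)
  exact ⟨a, hXY ha, B', (hB'B.trans hBX).trans hXY, hB'l, fun b hb ↦ hXY (haB b (hB'B hb)),
    fun b hb ↦ hcB b (hB'B hb), fun b hb ↦ hcaB b (hB'B hb)⟩

theorem comp {κ' : Type*} (h : HasMonoSchurConfig c k X) (f : κ → κ') :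
    HasMonoSchurConfig (f ∘ c) k X := by
  obtain ⟨a, ha, B, hBX, hBk, haB, hcB, hcaB⟩ := h
  exact ⟨a, ha, B, hBX, hBk, haB, fun b hb ↦ congrArg f (hcB b hb),
    fun b hb ↦ congrArg f (hcaB b hb)⟩

theorem exists_colorClass [DecidableEq κ] (h : HasMonoSchurConfig c k X) :
    ∃ a ∈ X, HasMonoSchurConfig c k {x ∈ X | c x = c a} := by
  obtain ⟨a, ha, B, hBX, hBk, haB, hcB, hcaB⟩ := h
  exact ⟨a, ha, a, Finset.mem_filter.2 ⟨ha, rfl⟩, B,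
    fun b hb ↦ Finset.mem_filter.2 ⟨hBX hb, hcB b hb⟩, hBk,
    fun b hb ↦ Finset.mem_filter.2 ⟨haB b hb, hcaB b hb⟩, hcB, hcaB⟩

end HasMonoSchurConfig

section

variable {G : Type*} [AddCommGroup G] {A : Set G}

theorem IsSchurSet.exists_finset_hasMonoSchurConfig (hA : IsSchurSet A) (κ : Type*) [Finite κ]
    (k : ℕ) : ∃ X : Finset G, (X : Set G) ⊆ A ∧ ∀ c : G → κ, HasMonoSchurConfig c k X := by
  obtain ⟨r, ⟨e⟩⟩ := Finite.exists_equiv_fin κ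
  obtain ⟨X, hXA, hX⟩ := hA r k
  refine ⟨X, hXA, fun c ↦ ?_⟩
  have hec : HasMonoSchurConfig (e ∘ c) k X := hX (e ∘ c)
  simpa only [← Function.comp_assoc, e.symm_comp_self, Function.id_comp] using hec.comp e.symm

theorem exists_coloring_of_not_isSchurSet (hA : ¬ IsSchurSet A) :
    ∃ r k : ℕ, ∀ X : Finset G, (X : Set G) ⊆ A →
      ∃ c : G → Fin r, ¬ HasMonoSchurConfig c k X := by
  contrapose! hA
  exact hA

theorem isSchurSet_partition_general {ι : Type*} [Finite ι] {X : ι → Set G} (hA : IsSchurSet A)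
    (hAX : A ⊆ ⋃ i, X i) : ∃ i, IsSchurSet (X i) := by
  classical
  cases nonempty_fintype ι
  by_contra! hX
  choose r k hbad using fun i ↦ exists_coloring_of_not_isSchurSet (hX i)
  obtain ⟨Z, hZA, hZ⟩ :=
    hA.exists_finset_hasMonoSchurConfig (∀ i, Prop × Fin (r i)) (Finset.univ.sup k)
  choose c hc using fun i ↦ hbad i {z ∈ Z | z ∈ X i} fun z hz ↦ (Finset.mem_filter.1 hz).2
  let d : G → ∀ i, Prop × Fin (r i) := fun z i ↦ (z ∈ X i, c i z)
  obtain ⟨a, haZ, hconfig⟩ := (hZ d).exists_colorClass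
  obtain ⟨i, hai⟩ := Set.mem_iUnion.1 (hAX (hZA haZ))
  have hclass : ({z ∈ Z | d z = d a} : Finset G) ⊆ {z ∈ Z | z ∈ X i} :=
    Finset.monotone_filter_right Z fun z _ hz ↦
      (congrArg (fun t ↦ (t i).1) hz : (z ∈ X i) = (a ∈ X i)).mpr hai
  exact hc i ((hconfig.comp fun t ↦ (t i).2).mono (Finset.le_sup (Finset.mem_univ i)) hclass)

end

/-- If `A` is a Schur subset of a countable commutative group `G` and `A = X ⊔ Y`
is a partition of `A` into two disjoint sets, then `X` is Schur or `Y` is Schur. -/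
theorem isSchurSet_partition {G : Type*} [AddCommGroup G] [Countable G]
    (A X Y : Set G) (hA : IsSchurSet A) (hXY : A = X ∪ Y) (hdisj : Disjoint X Y) :
    IsSchurSet X ∨ IsSchurSet Y := by
  simpa [or_comm] using isSchurSet_partition_general hA (hXY.trans Set.union_eq_iUnion).subset
end

section
/- Let G be a countable commutative group. A subset A ⊆ G belongs to some free Schur ultrafilter on G if and only if A is a Schur subset of G. -/
/-!
Call a set *`k`-sum-rich* if it contains an element `a` and `k` elements `b` such that it also
contains every `a + b`. An ultrafilter is free and Schur iff its members are `k`-sum-rich for all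
`k`: if no `a` in a member `U` had `k` partners, joining each `a` to its partners and to `a + a`
would give a digraph of bounded out-degree, hence of finite chromatic number, and some color class
in the ultrafilter would, once `0` is removed, contain no `a`, `b`, `a + b` inside `U`.
Moreover `A` lies in an ultrafilter of sum-rich sets iff every finite coloring of `A` has a
sum-rich color class, and by compactness this is the Schur property of `A`.
-/

open scoped Finset

section Compactness

variable {α κ : Type*} [Finite κ]

theorem forall_coloring_iff_exists_finset {P : Set α → Prop} (hmono : Monotone P)
    (hfin : ∀ U, P U → ∃ F : Finset α, ↑F ⊆ U ∧ P F) (A : Set α) :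
    (∀ c : α → κ, ∃ i, P (A ∩ c ⁻¹' {i})) ↔
      ∃ X : Finset α, ↑X ⊆ A ∧ ∀ c : α → κ, ∃ i, P (X ∩ c ⁻¹' {i}) := by
  classical
  refine ⟨fun hA ↦ ?_, fun ⟨X, hXA, hX⟩ c ↦ (hX c).imp fun _ ↦
    hmono (Set.inter_subset_inter_left _ hXA)⟩
  by_contra! hbad
  choose g hg using fun S : Finset α ↦
    hbad {x ∈ S | x ∈ A} fun x hx ↦ (Finset.mem_filter.1 hx).2
  obtain ⟨c, hc⟩ := Finset.rado_selection g
  obtain ⟨i, hi⟩ := hA c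
  obtain ⟨F, hFA, hPF⟩ := hfin _ hi
  obtain ⟨T, hFT, hcT⟩ := hc F
  refine hg T i (hmono (fun x hx ↦ ⟨?_, ?_⟩) hPF)
  · exact Finset.mem_filter.2 ⟨hFT hx, (hFA hx).1⟩
  · exact (hcT x hx).symm.trans (hFA hx).2

end Compactness

section BoundedOutDegree

variable {V : Type*} {R : V → V → Prop} {d : ℕ}

open Classical in
theorem card_filter_le_of_encard_le {v : V} (hv : {w | R v w}.encard ≤ d) (S : Finset V) :
    #{w ∈ S | R v w} ≤ d := by
  rw [← Nat.cast_le (α := ℕ∞), ← Set.encard_coe_eq_coe_finsetCard]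
  exact (Set.encard_le_encard fun w hw ↦ (Finset.mem_filter.1 hw).2).trans hv

open Classical in
theorem exists_card_inNeighbors_le (hR : ∀ v, {w | R v w}.encard ≤ d) {S : Finset V}
    (hS : S.Nonempty) : ∃ v ∈ S, #{w ∈ S | R w v} ≤ d := by
  refine Finset.exists_le_of_sum_le hS ?_
  calc ∑ v ∈ S, #{w ∈ S | R w v}
      = ∑ v ∈ S, #{w ∈ S | R v w} :=
        (Finset.sum_card_bipartiteAbove_eq_sum_card_bipartiteBelow R).symm
    _ ≤ ∑ _v ∈ S, d := Finset.sum_le_sum fun v _ ↦ card_filter_le_of_encard_le (hR v) S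

open Classical in
theorem exists_coloring_insert {n : ℕ} {S : Finset V} {v : V} (hvS : v ∉ S)
    (hcard : #{w ∈ S | R v w ∨ R w v} < n) {c : V → Fin n}
    (hc : ∀ i, (S ∩ c ⁻¹' {i} : Set V).Pairwise fun a b ↦ ¬ R a b) :
    ∃ c' : V → Fin n, ∀ i,
      (↑(insert v S) ∩ c' ⁻¹' {i} : Set V).Pairwise fun a b ↦ ¬ R a b := by
  obtain ⟨j, -, hj⟩ : ∃ j ∈ Finset.univ, j ∉ {w ∈ S | R v w ∨ R w v}.image c :=
    Finset.exists_mem_notMem_of_card_lt_card <| by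
      simpa using Finset.card_image_le.trans_lt hcard
  have hj_free : ∀ w ∈ S, c w = j → ¬ R v w ∧ ¬ R w v := fun w hw hwj ↦
    not_or.1 fun hvw ↦ hj (Finset.mem_image.2 ⟨w, Finset.mem_filter.2 ⟨hw, hvw⟩, hwj⟩)
  have hupdate : ∀ w ∈ S, Function.update c v j w = c w := fun w hw ↦
    Function.update_of_ne (ne_of_mem_of_not_mem hw hvS) j c
  refine ⟨Function.update c v j, ?_⟩
  rintro i a ⟨ha, hai⟩ b ⟨hb, hbi⟩ hab
  rw [Set.mem_preimage, Set.mem_singleton_iff] at hai hbi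
  rcases Finset.mem_insert.1 ha with rfl | haS <;> rcases Finset.mem_insert.1 hb with rfl | hbS
  · exact absurd rfl hab
  · rw [Function.update_self] at hai
    exact (hj_free b hbS (by rw [← hupdate b hbS, hbi, hai])).1
  · rw [Function.update_self] at hbi
    exact (hj_free a haS (by rw [← hupdate a haS, hai, hbi])).2
  · exact hc i ⟨haS, (hupdate a haS).symm.trans hai⟩ ⟨hbS, (hupdate b hbS).symm.trans hbi⟩ hab

theorem exists_coloring_finset_of_encard_le (hR : ∀ v, {w | R v w}.encard ≤ d) (S : Finset V) :
    ∃ c : V → Fin (2 * d + 1), ∀ i, (S ∩ c ⁻¹' {i} : Set V).Pairwise fun a b ↦ ¬ R a b := by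
  classical
  induction S using Finset.strongInduction with
  | H S ih =>
    obtain rfl | hS := S.eq_empty_or_nonempty
    · exact ⟨fun _ ↦ 0, by simp⟩
    obtain ⟨v, hvS, hv_in⟩ := exists_card_inNeighbors_le hR hS
    obtain ⟨c, hc⟩ := ih (S.erase v) (Finset.erase_ssubset hvS)
    have hv_deg : #{w ∈ S.erase v | R v w ∨ R w v} < 2 * d + 1 := by
      calc #{w ∈ S.erase v | R v w ∨ R w v}
          ≤ #{w ∈ S | R v w ∨ R w v} :=
            Finset.card_le_card (Finset.filter_subset_filter _ (S.erase_subset v))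
        _ ≤ #{w ∈ S | R v w} + #{w ∈ S | R w v} := by
            rw [Finset.filter_or]
            exact Finset.card_union_le _ _
        _ ≤ d + d := add_le_add (card_filter_le_of_encard_le (hR v) S) hv_in
        _ < 2 * d + 1 := by lia
    simpa only [Finset.insert_erase hvS] using
      exists_coloring_insert (S.notMem_erase v) hv_deg hc

theorem exists_coloring_of_encard_le (hR : ∀ v, {w | R v w}.encard ≤ d) :
    ∃ c : V → Fin (2 * d + 1), ∀ i, (c ⁻¹' {i}).Pairwise fun a b ↦ ¬ R a b := by
  classical
  by_contra! hbad
  have hedge : ∀ U : Set V, (¬ U.Pairwise fun a b ↦ ¬ R a b) →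
      ∃ F : Finset V, ↑F ⊆ U ∧ ¬ (F : Set V).Pairwise fun a b ↦ ¬ R a b := by
    intro U hU
    simp only [Set.Pairwise, not_forall, not_not] at hU
    obtain ⟨a, ha, b, hb, hab, hRab⟩ := hU
    refine ⟨{a, b}, by simp [Set.insert_subset_iff, ha, hb], fun h ↦ ?_⟩
    exact h (by simp) (by simp) hab hRab
  obtain ⟨X, -, hX⟩ := (forall_coloring_iff_exists_finset
    (fun _ _ hUW hU hW ↦ hU (hW.mono hUW)) hedge Set.univ).1 (by simpa using hbad)
  obtain ⟨c, hc⟩ := exists_coloring_finset_of_encard_le hR X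
  obtain ⟨i, hi⟩ := hX c
  exact hi (hc i)

end BoundedOutDegree

section Ultrafilter

variable {α : Type*}

theorem exists_preimage_singleton_mem {κ : Type*} [Finite κ] (u : Ultrafilter α) (c : α → κ) :
    ∃ i, c ⁻¹' {i} ∈ u :=
  Ultrafilter.eventually_exists_iff.1 (.of_forall fun x ↦ ⟨c x, rfl⟩)

theorem exists_mem_pairwise_not_of_encard_le {R : α → α → Prop} {d : ℕ}
    (hR : ∀ a, {b | R a b}.encard ≤ d) (u : Ultrafilter α) :
    ∃ U ∈ u, U.Pairwise fun a b ↦ ¬ R a b := by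
  obtain ⟨c, hc⟩ := exists_coloring_of_encard_le hR
  obtain ⟨i, hi⟩ := exists_preimage_singleton_mem u c
  exact ⟨_, hi, hc i⟩

theorem exists_ultrafilter_forall_mem_iff_forall_coloring {P : Set α → Prop} (hmono : Monotone P)
    (hempty : ¬ P ∅) (A : Set α) :
    (∃ u : Ultrafilter α, A ∈ u ∧ ∀ U ∈ u, P U) ↔
      ∀ (r : ℕ) (c : α → Fin r), ∃ i, P (A ∩ c ⁻¹' {i}) := by
  refine ⟨fun ⟨u, hA, hu⟩ r c ↦ ?_, fun hA ↦ ?_⟩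
  · obtain ⟨i, hi⟩ := exists_preimage_singleton_mem u c
    exact ⟨i, hu _ (Filter.inter_mem hA hi)⟩
  have hinter : ∀ T : Finset (Set α), ↑T ⊆ {W | ¬ P (A \ W)} → (⋂₀ (T : Set (Set α))).Nonempty := by
    intro T hT
    by_contra hTempty
    -- Color each point by a member of `T` that misses it.
    have hmiss : ∀ x, ∃ W : T, x ∉ W.1 := by
      simpa [Set.Nonempty] using hTempty
    choose f hf using hmiss
    obtain ⟨i, hi⟩ := hA #T fun x ↦ T.equivFin (f x)
    refine hT (T.equivFin.symm i).2 (hmono (fun x hx ↦ ⟨hx.1, ?_⟩) hi)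
    rw [← show T.equivFin (f x) = i from hx.2, Equiv.symm_apply_apply]
    exact hf x
  obtain ⟨u, hu⟩ := Ultrafilter.exists_ultrafilter_of_finite_inter_nonempty _ hinter
  refine ⟨u, hu (by simpa using hempty), fun U hU ↦ ?_⟩
  by_contra hPU
  have hUc : Uᶜ ∈ u := hu fun h ↦ hPU (hmono (by simp) h)
  exact Ultrafilter.compl_mem_iff_notMem.1 hUc hU

end Ultrafilter

/-- `U` is `k`-sum-rich if some `a ∈ U` has at least `k` elements `b ∈ U` with `a + b ∈ U`. This is
the monochromatic pattern of `IsSchurSet`; using "at least" rather than "exactly" `k` makes the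
notion antitone in `k` at once. -/
def IsSumRich {S : Type*} [Add S] (k : ℕ) (U : Set S) : Prop :=
  ∃ a ∈ U, k ≤ {b ∈ U | a + b ∈ U}.encard

section Add

variable {S : Type*} [Add S] {k l : ℕ} {U W : Set S}

theorem isSumRich_iff_exists_finset :
    IsSumRich k U ↔ ∃ a ∈ U, ∃ B : Finset S, #B = k ∧ ∀ b ∈ B, b ∈ U ∧ a + b ∈ U := by
  refine exists_congr fun a ↦ and_congr_right fun _ ↦ ⟨fun hk ↦ ?_, ?_⟩
  · obtain ⟨B, hB, hBk⟩ := Set.exists_subset_encard_eq hk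
    lift B to Finset S using Set.finite_of_encard_eq_coe hBk
    exact ⟨B, by simpa using hBk, fun b hb ↦ hB hb⟩
  · rintro ⟨B, rfl, hB⟩
    rw [← Set.encard_coe_eq_coe_finsetCard]
    exact Set.encard_le_encard hB

theorem IsSumRich.mono (hUW : U ⊆ W) : IsSumRich k U → IsSumRich k W :=
  fun ⟨a, ha, hk⟩ ↦ ⟨a, hUW ha, hk.trans <| Set.encard_le_encard fun _ hb ↦ ⟨hUW hb.1, hUW hb.2⟩⟩

theorem IsSumRich.of_le (hlk : l ≤ k) : IsSumRich k U → IsSumRich l U :=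
  fun ⟨a, ha, hk⟩ ↦ ⟨a, ha, (Nat.cast_le.2 hlk).trans hk⟩

theorem not_isSumRich_empty : ¬ IsSumRich k (∅ : Set S) :=
  fun ⟨_, ha, _⟩ ↦ ha

theorem IsSumRich.exists_finset_subset (hU : IsSumRich k U) :
    ∃ F : Finset S, ↑F ⊆ U ∧ IsSumRich k (F : Set S) := by
  classical
  obtain ⟨a, ha, B, hBk, hB⟩ := isSumRich_iff_exists_finset.1 hU
  refine ⟨insert a (B ∪ B.image (a + ·)), ?_, isSumRich_iff_exists_finset.2
    ⟨a, by simp, B, hBk, fun b hb ↦ ⟨by simp [hb], ?_⟩⟩⟩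
  · intro x hx
    simp only [Finset.coe_insert, Finset.coe_union, Finset.coe_image, Set.mem_insert_iff,
      Set.mem_union, Finset.mem_coe, Set.mem_image] at hx
    obtain rfl | hx | ⟨b, hb, rfl⟩ := hx
    exacts [ha, (hB x hx).1, (hB b hb).2]
  · exact Finset.mem_insert_of_mem <|
      Finset.mem_union_right _ <| Finset.mem_image_of_mem (a + ·) hb

theorem exists_forall_isSumRich_iff {ι : Type*} [Finite ι] {f : ι → Set S} :
    (∃ i, ∀ k, IsSumRich k (f i)) ↔ ∀ k, ∃ i, IsSumRich k (f i) := by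
  refine ⟨fun ⟨i, hi⟩ k ↦ ⟨i, hi k⟩, fun h ↦ ?_⟩
  by_contra! hpoor
  choose κ hκ using hpoor
  obtain ⟨m, hm⟩ := Finite.bddAbove_range κ
  obtain ⟨i, hi⟩ := h m
  exact hκ i (hi.of_le (hm ⟨i, rfl⟩))

theorem isFreeUltrafilter_of_forall_isSumRich {u : Ultrafilter S}
    (hu : ∀ U ∈ u, ∀ k, IsSumRich k U) : IsFreeUltrafilter u := by
  intro U hU hfin
  obtain ⟨a, -, hk⟩ := hu U hU (U.ncard + 1)
  have hle : ((U.ncard + 1 : ℕ) : ℕ∞) ≤ U.ncard :=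
    hfin.cast_ncard_eq ▸ hk.trans (Set.encard_le_encard (Set.sep_subset U _))
  exact (Nat.lt_succ_self _).not_ge (Nat.cast_le.1 hle)

theorem isSchurUltrafilter_of_forall_isSumRich {u : Ultrafilter S}
    (hu : ∀ U ∈ u, IsSumRich 1 U) : IsSchurUltrafilter u := by
  intro U hU
  obtain ⟨a, ha, hk⟩ := hu U hU
  obtain ⟨b, hb, hab⟩ := Set.one_le_encard_iff_nonempty.1 (by simpa only [Nat.cast_one] using hk)
  exact ⟨a, ha, b, hb, hab⟩

end Add

section AddMonoid

variable {M : Type*} [AddMonoid M] [IsLeftCancelAdd M] {u : Ultrafilter M}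

theorem IsFreeUltrafilter.isSumRich_of_mem (hfree : IsFreeUltrafilter u)
    (hschur : IsSchurUltrafilter u) {U : Set M} (hU : U ∈ u) (k : ℕ) : IsSumRich k U := by
  by_contra hpoor
  have hpartners : ∀ a ∈ U, {b ∈ U | a + b ∈ U}.encard ≤ k := fun a ha ↦
    le_of_not_ge fun hk ↦ hpoor ⟨a, ha, hk⟩
  -- The edge `a → a + a` excludes the Schur triples with `a = b`, which independence cannot see.
  let R : M → M → Prop := fun a b ↦ a ∈ U ∧ b ∈ insert (a + a) {b ∈ U | a + b ∈ U}
  have hR : ∀ a, {b | R a b}.encard ≤ (k + 1 : ℕ) := by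
    intro a
    by_cases ha : a ∈ U
    · calc {b | R a b}.encard
          ≤ (insert (a + a) {b ∈ U | a + b ∈ U}).encard := Set.encard_le_encard fun b hb ↦ hb.2
        _ ≤ {b ∈ U | a + b ∈ U}.encard + 1 := Set.encard_insert_le _ _
        _ ≤ (k + 1 : ℕ) := by
          rw [Nat.cast_add_one]
          gcongr
          exact hpartners a ha
    · simp [R, ha]
  obtain ⟨I, hI, hindep⟩ := exists_mem_pairwise_not_of_encard_le hR u
  have hzero : ({0}ᶜ : Set M) ∈ u :=
    Ultrafilter.compl_mem_iff_notMem.2 fun h ↦ hfree _ h (Set.finite_singleton 0)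
  obtain ⟨a, ⟨⟨haU, haI⟩, ha0⟩, b, ⟨⟨hbU, hbI⟩, -⟩, ⟨habU, habI⟩, -⟩ :=
    hschur _ (Filter.inter_mem (Filter.inter_mem hU hI) hzero)
  by_cases hab : a = b
  · subst hab
    have ha_ne : a ≠ a + a := fun h ↦ ha0 (left_eq_add.1 h)
    exact hindep haI habI ha_ne ⟨haU, Set.mem_insert _ _⟩
  · exact hindep haI hbI hab ⟨haU, Set.mem_insert_of_mem _ ⟨hbU, habU⟩⟩

theorem isFreeUltrafilter_and_isSchurUltrafilter_iff :
    IsFreeUltrafilter u ∧ IsSchurUltrafilter u ↔ ∀ U ∈ u, ∀ k, IsSumRich k U :=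
  ⟨fun ⟨hfree, hschur⟩ _ hU ↦ hfree.isSumRich_of_mem hschur hU, fun hu ↦
    ⟨isFreeUltrafilter_of_forall_isSumRich hu,
      isSchurUltrafilter_of_forall_isSumRich fun U hU ↦ hu U hU 1⟩⟩

end AddMonoid

section AddCommGroup

variable {G : Type*} [AddCommGroup G] {A : Set G}

theorem isSchurSet_iff_exists_finset :
    IsSchurSet A ↔ ∀ r k : ℕ, ∃ X : Finset G, ↑X ⊆ A ∧
      ∀ c : G → Fin r, ∃ i, IsSumRich k (X ∩ c ⁻¹' {i}) := by
  refine forall₂_congr fun r k ↦ exists_congr fun X ↦ and_congr_right fun _ ↦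
    forall_congr' fun c ↦ ?_
  simp only [isSumRich_iff_exists_finset]
  constructor
  · rintro ⟨a, ha, B, hBX, hBk, haB, hcB, hcaB⟩
    exact ⟨c a, a, ⟨ha, rfl⟩, B, hBk, fun b hb ↦ ⟨⟨hBX hb, hcB b hb⟩, haB b hb, hcaB b hb⟩⟩
  · rintro ⟨_, a, ⟨ha, rfl⟩, B, hBk, hB⟩
    exact ⟨a, ha, B, fun b hb ↦ (hB b hb).1.1, hBk, fun b hb ↦ (hB b hb).2.1,
      fun b hb ↦ (hB b hb).1.2, fun b hb ↦ (hB b hb).2.2⟩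

theorem isSchurSet_iff_forall_coloring :
    IsSchurSet A ↔ ∀ (r : ℕ) (c : G → Fin r), ∃ i, ∀ k, IsSumRich k (A ∩ c ⁻¹' {i}) := by
  rw [isSchurSet_iff_exists_finset]
  refine forall_congr' fun r ↦ ?_
  simp only [exists_forall_isSumRich_iff]
  rw [forall_comm (α := G → Fin r)]
  exact forall_congr' fun k ↦ (forall_coloring_iff_exists_finset (fun _ _ ↦ IsSumRich.mono)
    (fun _ ↦ IsSumRich.exists_finset_subset) A).symm

theorem mem_free_schur_ultrafilter_iff_isSchurSet_general (A : Set G) :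
    (∃ u : Ultrafilter G, IsFreeUltrafilter u ∧ IsSchurUltrafilter u ∧ A ∈ u) ↔
      IsSchurSet A := by
  calc (∃ u : Ultrafilter G, IsFreeUltrafilter u ∧ IsSchurUltrafilter u ∧ A ∈ u)
      ↔ ∃ u : Ultrafilter G, A ∈ u ∧ ∀ U ∈ u, ∀ k, IsSumRich k U := by
        simp only [← isFreeUltrafilter_and_isSchurUltrafilter_iff, and_comm, and_assoc]
    _ ↔ ∀ (r : ℕ) (c : G → Fin r), ∃ i, ∀ k, IsSumRich k (A ∩ c ⁻¹' {i}) :=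
        exists_ultrafilter_forall_mem_iff_forall_coloring
          (fun _ _ hUW hU k ↦ (hU k).mono hUW) (fun h ↦ not_isSumRich_empty (h 0)) A
    _ ↔ IsSchurSet A := isSchurSet_iff_forall_coloring.symm

end AddCommGroup

/-- A subset `A` of a countable commutative group `G` belongs to some free Schur
ultrafilter on `G` if and only if `A` is a Schur set. -/
theorem mem_free_schur_ultrafilter_iff_isSchurSet {G : Type*} [AddCommGroup G] [Countable G]
    (A : Set G) :
    (∃ u : Ultrafilter G, IsFreeUltrafilter u ∧ IsSchurUltrafilter u ∧ A ∈ u) ↔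
      IsSchurSet A :=
  mem_free_schur_ultrafilter_iff_isSchurSet_general A
end

section
/- Let U be a Schur subset of ℤ consisting of positive integers. Then there exists a Schur subset W ⊆ U of ℤ such that for every a ∈ W the set {b ∈ W : a + b ∈ W} is finite. -/
/-!
Characters embed any commutative group in a compact Hausdorff group. Colouring by a finite cover of
that compact group by small translates forces `a`, `b` and `a + b` to lie close to `0`, so a Schur
set stays Schur after intersecting it with a neighbourhood of `0` (a Bohr set), and `0` itself can
be discarded too.

This allows a greedy construction of finite sets `S 0 ⊆ S 1 ⊆ ⋯` in `U \ {0}`: to pass from `S n` to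
`S (n + 1)`, add a finite witness `X` of the Schur property for the next pair `(r, k)`, taken in a
Bohr set so small that neither the elements of `X` nor their differences are nonzero elements of
`S n ∪ (S n - S n) ∪ (S n + S n)`. Let `a ∈ S n` and `b, a + b ∈ S (n + 1)`. Then `X` cannot contain
`a + b` alone, which would lie in `S n + S n`, nor `b = (a + b) - a` alone, which would lie in
`S n - S n`, nor both, because `a = (a + b) - b`. Hence `b, a + b ∈ S n`, and by induction, if
`a ∈ S m` and both `b` and `a + b` lie in `⋃ n, S n`, then `b ∈ S m`.
-/

open Set Topology
open scoped Pointwise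

/-- The finite set `X` witnesses the defining property of a Schur set for `r` colours and
`k`-element sets. Isolating it makes `IsSchurSet A` the statement that `A` contains a witness for
all `r` and `k`. -/
def IsSchurWitness {G : Type*} [AddCommGroup G] (r k : ℕ) (X : Finset G) : Prop :=
  ∀ c : G → Fin r, ∃ a ∈ X, ∃ B : Finset G,
    B ⊆ X ∧ B.card = k ∧ (∀ b ∈ B, a + b ∈ X) ∧
    (∀ b ∈ B, c b = c a) ∧ (∀ b ∈ B, c (a + b) = c a)

section Characters

lemma exists_injective_addCircle_rat_unitAddCircle :
    ∃ ι : AddCircle (1 : ℚ) →+ UnitAddCircle, Function.Injective ι := by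
  let castHom : ℚ →+ ℝ := (Rat.castHom ℝ).toAddMonoidHom
  have comap_eq : (AddSubgroup.zmultiples (1 : ℝ)).comap castHom = AddSubgroup.zmultiples 1 := by
    ext q
    simp only [AddSubgroup.mem_comap, AddSubgroup.mem_zmultiples_iff, zsmul_one, castHom]
    exact exists_congr fun n => by
      change (n : ℝ) = (q : ℝ) ↔ _
      exact_mod_cast Iff.rfl
  refine ⟨QuotientAddGroup.map _ _ castHom comap_eq.ge, ?_⟩
  rw [← AddMonoidHom.ker_eq_bot_iff, QuotientAddGroup.ker_map, comap_eq,
    QuotientAddGroup.map_mk'_self]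

variable {G : Type*} [AddCommGroup G]

lemma exists_unitAddCircle_hom_apply_ne_zero {x : G} (hx : x ≠ 0) :
    ∃ χ : G →+ UnitAddCircle, χ x ≠ 0 := by
  obtain ⟨ι, ι_injective⟩ := exists_injective_addCircle_rat_unitAddCircle
  obtain ⟨χ, hχ⟩ := CharacterModule.exists_character_apply_ne_zero_of_ne_zero hx
  exact ⟨ι.comp χ, (map_ne_zero_iff ι ι_injective).2 hχ⟩

variable (G) in
/-- The canonical map from `G` to the product of circles indexed by all characters of `G`, regarded
as a discrete group. The closure of its image is the Bohr compactification of `G`. -/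
noncomputable def bohrMap : G →+ ((G →+ UnitAddCircle) → UnitAddCircle) :=
  (AddMonoidHom.coeFn _ _).comp AddMonoidHom.eval

lemma bohrMap_injective : Function.Injective (bohrMap G) := by
  refine (injective_iff_map_eq_zero _).2 fun x hx => ?_
  by_contra x_ne_zero
  obtain ⟨χ, hχ⟩ := exists_unitAddCircle_hom_apply_ne_zero x_ne_zero
  exact hχ (congrFun hx χ)

end Characters

lemma exists_finite_coloring_sub_mem {K : Type*} [AddCommGroup K] [TopologicalSpace K]
    [IsTopologicalAddGroup K] [CompactSpace K] {N : Set K} (hN : N ∈ 𝓝 0) :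
    ∃ (t : Finset K) (d : K → t), ∀ x y, d x = d y → x - y ∈ N := by
  obtain ⟨V, hV, sub_mem⟩ := exists_nhds_half_neg hN
  obtain ⟨t, ht⟩ := compact_covered_by_add_left_translates (isCompact_univ (X := K))
    ⟨0, mem_interior_iff_mem_nhds.2 hV⟩
  have exists_translate (x : K) : ∃ g : t, g.1 + x ∈ V := by
    simpa using ht (mem_univ x)
  choose d hd using exists_translate
  refine ⟨t, d, fun x y hxy => ?_⟩
  have hy : (d x).1 + y ∈ V := hxy ▸ hd y
  simpa only [add_sub_add_left_eq_sub] using sub_mem _ (hd x) _ hy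

lemma setOf_add_mem_iUnion_subset {M : Type*} [Add M] {S : ℕ → Set M} (hS : Monotone S)
    (hstep : ∀ n, ∀ a ∈ S n, ∀ b ∈ S (n + 1), a + b ∈ S (n + 1) → b ∈ S n ∧ a + b ∈ S n)
    {m : ℕ} {a : M} (ha : a ∈ S m) :
    {b ∈ ⋃ n, S n | a + b ∈ ⋃ n, S n} ⊆ S m := by
  have descend (n : ℕ) (hmn : m ≤ n) : ∀ b ∈ S n, a + b ∈ S n → b ∈ S m := by
    induction n, hmn using Nat.le_induction with
    | base => exact fun b hb _ => hb
    | succ n hmn ih =>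
      intro b hb hab
      obtain ⟨hb', hab'⟩ := hstep n a (hS hmn ha) b hb hab
      exact ih b hb' hab'
  rintro b ⟨hb, hab⟩
  obtain ⟨i, hi⟩ := mem_iUnion.1 hb
  obtain ⟨j, hj⟩ := mem_iUnion.1 hab
  exact descend (max m (max i j)) (le_max_left _ _) b (hS (by simp) hi) (hS (by simp) hj)

section Schur

variable {G : Type*} [AddCommGroup G]

lemma IsSchurWitness.mono {r k : ℕ} {X Y : Finset G} (hX : IsSchurWitness r k X) (hXY : X ⊆ Y) :
    IsSchurWitness r k Y := by
  intro c
  obtain ⟨a, ha, B, hB, B_card, hab, hc, hc'⟩ := hX c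
  exact ⟨a, hXY ha, B, hB.trans hXY, B_card, fun b hb => hXY (hab b hb), hc, hc'⟩

lemma isSchurSet_iff_forall_exists_isSchurWitness {A : Set G} :
    IsSchurSet A ↔ ∀ r k, ∃ X : Finset G, (X : Set G) ⊆ A ∧ IsSchurWitness r k X :=
  Iff.rfl

namespace IsSchurSet

variable {A : Set G}

lemma of_finite_coloring {ι : Type*} [Finite ι] {A' : Set G} (hA : IsSchurSet A) (d : G → ι)
    (hd : ∀ a ∈ A, ∀ b ∈ A, b ≠ 0 → a + b ∈ A → d b = d a → d (a + b) = d a →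
      a ∈ A' ∧ b ∈ A' ∧ a + b ∈ A') :
    IsSchurSet A' := by
  classical
  intro r k
  let e := Finite.equivFin (Fin r × ι)
  -- One extra element allows for `0 ∈ B`, the other keeps `B \ {0}` nonempty when `k = 0`.
  obtain ⟨X, hXA, hX⟩ := hA (Nat.card (Fin r × ι)) (k + 2)
  refine ⟨X.filter (· ∈ A'), fun x hx => (Finset.mem_filter.1 hx).2, fun c => ?_⟩
  obtain ⟨a, ha, B, hBX, B_card, habX, hb_color, hab_color⟩ := hX fun x => e (c x, d x)
  simp only [EmbeddingLike.apply_eq_iff_eq, Prod.mk.injEq] at hb_color hab_color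
  have mem_A' : ∀ b ∈ B.erase 0, a ∈ A' ∧ b ∈ A' ∧ a + b ∈ A' := by
    intro b hb
    obtain ⟨b_ne_zero, hb⟩ := Finset.mem_erase.1 hb
    exact hd a (hXA ha) b (hXA (hBX hb)) b_ne_zero (hXA (habX b hb)) (hb_color b hb).2
      (hab_color b hb).2
  have card_erase : k + 1 ≤ (B.erase 0).card := by
    have := Finset.pred_card_le_card_erase (s := B) (a := 0)
    omega
  obtain ⟨b₀, hb₀⟩ : (B.erase 0).Nonempty := Finset.card_pos.1 (by omega)
  obtain ⟨B', hB', B'_card⟩ := Finset.exists_subset_card_eq (k.le_succ.trans card_erase)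
  have hB'B : B' ⊆ B := hB'.trans (Finset.erase_subset _ _)
  exact ⟨a, Finset.mem_filter.2 ⟨ha, (mem_A' b₀ hb₀).1⟩, B',
    fun b hb => Finset.mem_filter.2 ⟨hBX (hB'B hb), (mem_A' b (hB' hb)).2.1⟩, B'_card,
    fun b hb => Finset.mem_filter.2 ⟨habX b (hB'B hb), (mem_A' b (hB' hb)).2.2⟩,
    fun b hb => (hb_color b (hB'B hb)).1, fun b hb => (hab_color b (hB'B hb)).1⟩

lemma diff_singleton_zero (hA : IsSchurSet A) : IsSchurSet (A \ {0}) := by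
  refine hA.of_finite_coloring (fun x => x = 0) fun a ha b hb b_ne_zero hab hb_color hab_color => ?_
  have a_ne_zero : a ≠ 0 := (eq_iff_iff.1 hb_color).not.1 b_ne_zero
  have ab_ne_zero : a + b ≠ 0 := (eq_iff_iff.1 hab_color).not.2 a_ne_zero
  exact ⟨⟨ha, a_ne_zero⟩, ⟨hb, b_ne_zero⟩, hab, ab_ne_zero⟩

lemma inter_preimage_of_mem_nhds_zero {K : Type*} [AddCommGroup K] [TopologicalSpace K]
    [IsTopologicalAddGroup K] [CompactSpace K] (hA : IsSchurSet A) (φ : G →+ K) {N : Set K}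
    (hN : N ∈ 𝓝 0) :
    IsSchurSet (A ∩ φ ⁻¹' N) := by
  obtain ⟨V, hV, add_mem⟩ := exists_nhds_zero_half hN
  have hVN : V ⊆ N := fun x hx => by simpa using add_mem x hx 0 (mem_of_mem_nhds hV)
  obtain ⟨t, d, hd⟩ := exists_finite_coloring_sub_mem hV
  refine hA.of_finite_coloring (d ∘ φ) fun a ha b hb _ hab hb_color hab_color => ?_
  have φa_mem : φ a ∈ V := by simpa using hd _ _ (hab_color.trans hb_color.symm)
  have φb_mem : φ b ∈ V := by simpa using hd _ _ hab_color
  have φab_mem : φ (a + b) ∈ N := map_add φ a b ▸ add_mem _ φa_mem _ φb_mem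
  exact ⟨⟨ha, hVN φa_mem⟩, ⟨hb, hVN φb_mem⟩, hab, φab_mem⟩

lemma exists_subset_disjoint_sub_disjoint (hA : IsSchurSet A) {T : Set G} (hT : T.Finite)
    (zero_notMem : 0 ∉ T) :
    ∃ A' ⊆ A, IsSchurSet A' ∧ Disjoint A' T ∧ Disjoint (A' - A') T := by
  have hN : (bohrMap G '' T)ᶜ ∈ 𝓝 0 := by
    refine (hT.image _).isClosed.isOpen_compl.mem_nhds ?_
    rintro ⟨x, hx, hx0⟩
    exact zero_notMem ((map_eq_zero_iff _ bohrMap_injective).1 hx0 ▸ hx)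
  obtain ⟨V, hV, sub_mem⟩ := exists_nhds_half_neg hN
  have hVT : ∀ x ∈ V, x ∉ bohrMap G '' T := fun x hx => by
    simpa using sub_mem x hx 0 (mem_of_mem_nhds hV)
  refine ⟨A ∩ bohrMap G ⁻¹' V, inter_subset_left, hA.inter_preimage_of_mem_nhds_zero _ hV, ?_, ?_⟩
  · exact disjoint_left.2 fun x hx hxT => hVT _ hx.2 (mem_image_of_mem _ hxT)
  · refine disjoint_left.2 ?_
    rintro _ ⟨x, hx, y, hy, rfl⟩ hxyT
    exact sub_mem _ hx.2 _ hy.2 (map_sub (bohrMap G) x y ▸ mem_image_of_mem _ hxyT)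

lemma exists_isSchurWitness_superset (hA : IsSchurSet A) (zero_notMem : 0 ∉ A) (r k : ℕ)
    (S : Finset G) (hS : (S : Set G) ⊆ A) :
    ∃ S' : Finset G, S ⊆ S' ∧ (S' : Set G) ⊆ A ∧ IsSchurWitness r k S' ∧
      ∀ a ∈ S, ∀ b ∈ S', a + b ∈ S' → b ∈ S ∧ a + b ∈ S := by
  classical
  let T : Finset G := (S ∪ (S - S) ∪ (S + S)).erase 0
  obtain ⟨A', hA'A, hA', disjoint_T, sub_disjoint_T⟩ :=
    hA.exists_subset_disjoint_sub_disjoint T.finite_toSet (by simp [T])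
  obtain ⟨X, hXA', hX⟩ := isSchurSet_iff_forall_exists_isSchurWitness.1 hA' r k
  have hXA : (X : Set G) ⊆ A := hXA'.trans hA'A
  have ne_zero {x : G} (hx : x ∈ A) : x ≠ 0 := ne_of_mem_of_not_mem hx zero_notMem
  have notMem_T {x : G} (hx : x ∈ X) : x ∉ T := disjoint_left.1 disjoint_T (hXA' hx)
  have sub_notMem_T {x y : G} (hx : x ∈ X) (hy : y ∈ X) : x - y ∉ T :=
    disjoint_left.1 sub_disjoint_T (sub_mem_sub (hXA' hx) (hXA' hy))
  refine ⟨S ∪ X, Finset.subset_union_left, by simp [hS, hXA], hX.mono Finset.subset_union_right, ?_⟩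
  intro a ha b hb hab
  rcases Finset.mem_union.1 hb with hbS | hbX <;> rcases Finset.mem_union.1 hab with habS | habX
  · exact ⟨hbS, habS⟩
  · have hab_T : a + b ∈ T := by
      simp [T, ne_zero (hXA habX), Finset.add_mem_add ha hbS]
    exact (notMem_T habX hab_T).elim
  · have hb_T : b ∈ T := by
      have : b ∈ S - S := add_sub_cancel_left a b ▸ Finset.sub_mem_sub habS ha
      simp [T, ne_zero (hXA hbX), this]
    exact (notMem_T hbX hb_T).elim
  · have ha_T : (a + b) - b ∈ T := by
      simp [T, ne_zero (hS ha), ha]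
    exact (sub_notMem_T habX hbX ha_T).elim

lemma exists_seq_isSchurWitness (hA : IsSchurSet A) (zero_notMem : 0 ∉ A) :
    ∃ S : ℕ → Finset G, Monotone S ∧ (∀ n, (S n : Set G) ⊆ A) ∧
      (∀ r k, ∃ n, IsSchurWitness r k (S n)) ∧
      ∀ n, ∀ a ∈ S n, ∀ b ∈ S (n + 1), a + b ∈ S (n + 1) → b ∈ S n ∧ a + b ∈ S n := by
  choose! next subset_next next_subset next_witness next_translates using
    hA.exists_isSchurWitness_superset zero_notMem
  obtain ⟨S, S_zero, S_succ⟩ : ∃ S : ℕ → Finset G, S 0 = ∅ ∧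
      ∀ n, S (n + 1) = next n.unpair.1 n.unpair.2 (S n) :=
    ⟨fun n => Nat.rec ∅ (fun i T => next i.unpair.1 i.unpair.2 T) n, rfl, fun _ => rfl⟩
  have hSA (n : ℕ) : (S n : Set G) ⊆ A := by
    induction n with
    | zero => simp [S_zero]
    | succ n ih => exact S_succ n ▸ next_subset _ _ _ ih
  refine ⟨S, monotone_nat_of_le_succ fun n => S_succ n ▸ subset_next _ _ _ (hSA n), hSA,
    fun r k => ⟨Nat.pair r k + 1, ?_⟩, fun n => S_succ n ▸ next_translates _ _ _ (hSA n)⟩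
  rw [S_succ, Nat.unpair_pair]
  exact next_witness r k _ (hSA _)

end IsSchurSet

theorem exists_schur_subset_with_finite_translates_general (U : Set G) (hU : IsSchurSet U) :
    ∃ W ⊆ U, IsSchurSet W ∧ ∀ a ∈ W, {b ∈ W | a + b ∈ W}.Finite := by
  obtain ⟨S, S_mono, hSU, S_witness, S_translates⟩ :=
    hU.diff_singleton_zero.exists_seq_isSchurWitness (by simp)
  refine ⟨⋃ n, (S n : Set G), iUnion_subset fun n => (hSU n).trans sdiff_subset, ?_, fun a ha => ?_⟩
  · refine isSchurSet_iff_forall_exists_isSchurWitness.2 fun r k => ?_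
    obtain ⟨n, hn⟩ := S_witness r k
    exact ⟨S n, subset_iUnion (fun n => (S n : Set G)) n, hn⟩
  · obtain ⟨m, ham⟩ := mem_iUnion.1 ha
    exact (S m).finite_toSet.subset <|
      setOf_add_mem_iUnion_subset (fun _ _ h => Finset.coe_subset.2 (S_mono h)) S_translates ham

end Schur

/-- If `U` is a Schur subset of `ℤ` consisting of positive integers, then there
exists a Schur subset `W ⊆ U` such that for every `a ∈ W` the set
`{b ∈ W | a + b ∈ W}` is finite. -/
theorem exists_schur_subset_with_finite_translates (U : Set ℤ)
    (hpos : ∀ n ∈ U, 0 < n) (hU : IsSchurSet U) :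
    ∃ W ⊆ U, IsSchurSet W ∧ ∀ a ∈ W, {b ∈ W | a + b ∈ W}.Finite :=
  exists_schur_subset_with_finite_translates_general U hU
end

section
/- The set Sch^fin(ℤ) of all free Schur ultrafilters on ℤ which are not infinitary Schur is an open dense subset of the space Sch(ℤ) of all free Schur ultrafilters on ℤ, where the space of all ultrafilters on ℤ carries the Stone topology and Sch(ℤ) carries the subspace topology. -/
/-- An ultrafilter `u` on an additive semigroup is *infinitary Schur* if for each
`U ∈ u` there exist `a ∈ U` and an infinite subset `B ⊆ U` with `a + B ⊆ U`. -/
def IsInfSchurUltrafilter {S : Type*} [Add S] (u : Ultrafilter S) : Prop :=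
  ∀ U ∈ u, ∃ a ∈ U, ∃ B ⊆ U, B.Infinite ∧ ∀ b ∈ B, a + b ∈ U

/-- The space `Sch(ℤ)` of free Schur ultrafilters on `ℤ`, with the subspace topology
inherited from the Stone topology on the space of all ultrafilters on `ℤ`. -/
abbrev SchZ : Type := {u : Ultrafilter ℤ // IsFreeUltrafilter u ∧ IsSchurUltrafilter u}

/-!
Call a set `V` Schur regular for a finite set of colours if every such colouring has a
monochromatic triple `a, b, a + b` in `V`. A set belongs to a Schur ultrafilter exactly when it is
Schur regular for any number of colours, and by compactness regularity for a fixed number of colours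
is already witnessed by a finite subset. Inside a member `U` of a free Schur ultrafilter `u` we can
therefore build finite sets `H 0 ⊆ H 1 ⊆ ⋯` with `H (n + 1)` regular for `n` colours. The points
added to `H n` can be taken in any prescribed member of `u`. For each `a` with `a + a ≠ a`, some
member of `u` is disjoint from its translate by `a`; hence the new points can be chosen so sparse
that a sum `a + b` with `a ∈ H n` never involves one of them. The union `V` of the `H n` lies in a
Schur ultrafilter, which is not infinitary Schur because `{b ∈ V | a + b ∈ V}` is finite for every
`a ∈ V`.
-/

section ShiftedSets

variable {α : Type*} {f : α → α}

theorem exists_maximal_mapsTo_compl (f : α → α) :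
    ∃ A : Set α, Maximal (fun A => Set.MapsTo f A Aᶜ) A := by
  refine zorn_subset {A | Set.MapsTo f A Aᶜ} fun 𝒞 h𝒞 hchain =>
    ⟨⋃₀ 𝒞, ?_, fun A hA => Set.subset_sUnion_of_mem hA⟩
  rintro x ⟨A, hA, hxA⟩ ⟨B, hB, hfxB⟩
  rcases hchain.total hA hB with hAB | hBA
  · exact h𝒞 hB (hAB hxA) hfxB
  · exact h𝒞 hA hxA (hBA hfxB)

theorem union_preimage_union_image_eq_univ_of_maximal (hf : ∀ x, f x ≠ x) {A : Set α}
    (hA : Maximal (fun A => Set.MapsTo f A Aᶜ) A) : A ∪ f ⁻¹' A ∪ f '' A = Set.univ := by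
  refine Set.eq_univ_of_forall fun x => ?_
  by_contra hx
  simp only [Set.mem_union, Set.mem_preimage, not_or] at hx
  obtain ⟨⟨hxA, hfxA⟩, hximage⟩ := hx
  have hinsert : Set.MapsTo f (insert x A) (insert x A)ᶜ := by
    rintro y (rfl | hyA) (hfy | hfyA)
    · exact hf y hfy
    · exact hfxA hfyA
    · exact hximage ⟨y, hyA, hfy⟩
    · exact hA.prop hyA hfyA
  exact hxA (hA.le_of_ge hinsert (Set.subset_insert x A) (Set.mem_insert x A))

theorem exists_mem_ultrafilter_mapsTo_compl (u : Ultrafilter α) (hinj : f.Injective)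
    (hf : ∀ x, f x ≠ x) : ∃ W ∈ u, Set.MapsTo f W Wᶜ := by
  obtain ⟨A, hA⟩ := exists_maximal_mapsTo_compl f
  have hcover : A ∪ f ⁻¹' A ∪ f '' A ∈ u := by
    rw [union_preimage_union_image_eq_univ_of_maximal hf hA]
    exact Filter.univ_mem
  rcases Ultrafilter.union_mem_iff.1 hcover with hcover | himage
  · rcases Ultrafilter.union_mem_iff.1 hcover with hmem | hpreimage
    · exact ⟨A, hmem, hA.prop⟩
    · exact ⟨f ⁻¹' A, hpreimage, fun _ hx hfx => hA.prop hx hfx⟩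
  · refine ⟨f '' A, himage, ?_⟩
    rintro _ ⟨x, hx, rfl⟩ ⟨y, hy, hyx⟩
    exact hA.prop hx (hinj hyx ▸ hy)

end ShiftedSets

section Idempotents

variable {S : Type*} [AddSemigroup S]

theorem add_self_eq_self_of_add_eq_right [IsRightCancelAdd S] {a b : S} (h : a + b = b) :
    a + a = a :=
  add_right_cancel (b := b) (by rw [add_assoc, h, h])

theorem subsingleton_setOf_add_self_eq_self [IsCancelAdd S] :
    {a : S | a + a = a}.Subsingleton := by
  intro a ha b hb
  have hleft : a + b = b := add_left_cancel (a := a) (by rw [← add_assoc, ha])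
  have hright : a + b = a := add_right_cancel (b := b) (by rw [add_assoc, hb])
  exact hright.symm.trans hleft

end Idempotents

section SchurRegular

variable {S κ : Type*} [Add S]

/-- `V` contains a *Schur triple* `a, b, a + b`; the elements `a` and `b` may coincide. -/
def HasSchurTriple (V : Set S) : Prop :=
  ∃ a ∈ V, ∃ b ∈ V, a + b ∈ V

theorem HasSchurTriple.mono {V W : Set S} (hV : HasSchurTriple V) (hVW : V ⊆ W) :
    HasSchurTriple W := by
  obtain ⟨a, ha, b, hb, hab⟩ := hV
  exact ⟨a, hVW ha, b, hVW hb, hVW hab⟩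

/-- `V` is *Schur regular* for the set `κ` of colours if every `κ`-colouring has a monochromatic
Schur triple in `V`. For convenience the whole semigroup is coloured; only the colours on `V`
matter. -/
def IsSchurRegular (κ : Type*) (V : Set S) : Prop :=
  ∀ c : S → κ, ∃ k, HasSchurTriple (V ∩ c ⁻¹' {k})

theorem IsSchurRegular.mono {V W : Set S} (hV : IsSchurRegular κ V) (hVW : V ⊆ W) :
    IsSchurRegular κ W := fun c =>
  (hV c).imp fun _ hk => hk.mono (Set.inter_subset_inter_left _ hVW)

theorem IsSchurRegular.of_injective {κ' : Type*} {V : Set S} (hV : IsSchurRegular κ V)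
    {e : κ' → κ} (he : e.Injective) : IsSchurRegular κ' V := by
  intro c
  obtain ⟨_, a, ⟨ha, rfl⟩, b, ⟨hb, hcb⟩, hab, hcab⟩ := hV (e ∘ c)
  exact ⟨c a, a, ⟨ha, rfl⟩, b, ⟨hb, he hcb⟩, hab, he hcab⟩

theorem IsSchurRegular.exists_finite_subset [Finite κ] {V : Set S} (hV : IsSchurRegular κ V) :
    ∃ G ⊆ V, G.Finite ∧ IsSchurRegular κ G := by
  by_contra! hG
  have hbad (s : Set S) (hs : s.Finite) :
      ∃ c : S → κ, ∀ k, ¬ HasSchurTriple (V ∩ s ∩ c ⁻¹' {k}) := by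
    simpa only [IsSchurRegular, not_forall, not_exists]
      using hG (V ∩ s) Set.inter_subset_left (hs.inter_of_right V)
  choose c hc using hbad
  obtain ⟨χ, hχ⟩ := Set.Finite.rado_selection c
  obtain ⟨k, a, ⟨haV, hak⟩, b, ⟨hbV, hbk⟩, habV, habk⟩ := hV χ
  obtain ⟨t, ht, hsub, hagree⟩ := hχ {a, b, a + b} (Set.toFinite _)
  have hmem (x : S) (hx : x ∈ ({a, b, a + b} : Set S)) (hxV : x ∈ V) (hxk : χ x = k) :
      x ∈ V ∩ t ∩ c t ht ⁻¹' {k} :=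
    ⟨⟨hxV, hsub hx⟩, (hagree x hx).symm.trans hxk⟩
  exact hc t ht k ⟨a, hmem a (by simp) haV hak, b, hmem b (by simp) hbV hbk,
    hmem (a + b) (by simp) habV habk⟩

theorem IsSchurUltrafilter.isSchurRegular [Finite κ] {u : Ultrafilter S}
    (hu : IsSchurUltrafilter u) {V : Set S} (hV : V ∈ u) : IsSchurRegular κ V := by
  intro c
  obtain ⟨k, hk⟩ := (u.map c).eq_pure_of_finite
  have hcolour : c ⁻¹' {k} ∈ u := Ultrafilter.mem_map.1 (hk ▸ Ultrafilter.mem_pure.2 rfl)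
  exact ⟨k, hu _ (Filter.inter_mem hV hcolour)⟩

theorem exists_isSchurUltrafilter_mem_of_isSchurRegular {V : Set S}
    (hV : ∀ n, IsSchurRegular (Fin n) V) : ∃ v : Ultrafilter S, V ∈ v ∧ IsSchurUltrafilter v := by
  let 𝒜 : Set (Set S) := {A | ¬ HasSchurTriple (V \ A)}
  have hfip (𝒯 : Finset (Set S)) (h𝒯 : (𝒯 : Set (Set S)) ⊆ 𝒜) :
      (⋂₀ (𝒯 : Set (Set S))).Nonempty := by
    by_contra hempty
    have hmissed (x : S) : ∃ A : 𝒯, x ∉ A.1 := by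
      by_contra! hx
      exact hempty ⟨x, fun A hA => hx ⟨A, hA⟩⟩
    choose c hc using hmissed
    obtain ⟨A, hA⟩ := (hV 𝒯.card).of_injective 𝒯.equivFin.injective c
    exact h𝒯 A.2 (hA.mono fun x hx => ⟨hx.1, hx.2 ▸ hc x⟩)
  obtain ⟨v, hv⟩ := Ultrafilter.exists_ultrafilter_of_finite_inter_nonempty 𝒜 hfip
  have hVv : V ∈ v := hv (by simp [𝒜, HasSchurTriple])
  refine ⟨v, hVv, fun A hA => ?_⟩
  by_contra hno
  have hAc : Aᶜ ∈ v := hv fun h => hno (h.mono fun x hx => not_not.1 hx.2)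
  exact Ultrafilter.compl_mem_iff_notMem.1 hAc hA

end SchurRegular

section FreeUltrafilters

variable {S : Type*}

theorem IsFreeUltrafilter.compl_mem_of_finite {u : Ultrafilter S} (hu : IsFreeUltrafilter u)
    {F : Set S} (hF : F.Finite) : Fᶜ ∈ u :=
  Ultrafilter.compl_mem_iff_notMem.2 fun h => hu F h hF

theorem IsSchurUltrafilter.isFreeUltrafilter_of_mem [Add S] {v : Ultrafilter S}
    (hv : IsSchurUltrafilter v) {V : Set S} (hV : V ∈ v) (hne : ∀ a ∈ V, a + a ≠ a) :
    IsFreeUltrafilter v := by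
  intro A hA hfin
  obtain ⟨x, -, rfl⟩ := Ultrafilter.eq_pure_of_finite_mem hfin hA
  obtain ⟨_, rfl, _, rfl, hadd⟩ := hv {x} rfl
  exact hne _ hV hadd

end FreeUltrafilters

section SumEndExtension

variable {S : Type*} [Add S]

/-- `K` is a *sum end extension* of `H ⊆ K` if a sum `a + b` formed within `K` whose left summand
lies in `H` is already formed within `H`. -/
structure IsSumEndExtension (H K : Set S) : Prop where
  subset : H ⊆ K
  mem_of_add_mem : ∀ a ∈ H, ∀ b ∈ K, a + b ∈ K → b ∈ H ∧ a + b ∈ H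

instance : Std.Refl (IsSumEndExtension (S := S)) where
  refl _ := ⟨subset_rfl, fun _ _ _ hb hab => ⟨hb, hab⟩⟩

instance : IsTrans (Set S) IsSumEndExtension where
  trans _ _ _ hHK hKL := by
    refine ⟨hHK.subset.trans hKL.subset, fun a ha b hb hab => ?_⟩
    obtain ⟨hbK, habK⟩ := hKL.mem_of_add_mem a (hHK.subset ha) b hb hab
    exact hHK.mem_of_add_mem a ha b hbK habK

/-- Each element of `V` is the left summand of only finitely many Schur triples in `V`. -/
def HasFiniteSchurFibers (V : Set S) : Prop :=
  ∀ a ∈ V, {b ∈ V | a + b ∈ V}.Finite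

theorem HasFiniteSchurFibers.not_isInfSchurUltrafilter {V : Set S} (hV : HasFiniteSchurFibers V)
    {v : Ultrafilter S} (hVv : V ∈ v) : ¬ IsInfSchurUltrafilter v := by
  intro hinf
  obtain ⟨a, ha, B, hBV, hB, hadd⟩ := hinf V hVv
  exact hB ((hV a ha).subset fun b hb => ⟨hBV hb, hadd b hb⟩)

theorem hasFiniteSchurFibers_iUnion {H : ℕ → Set S} (hfin : ∀ n, (H n).Finite)
    (hext : ∀ n, IsSumEndExtension (H n) (H (n + 1))) : HasFiniteSchurFibers (⋃ n, H n) := by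
  intro a ha
  obtain ⟨m, ham⟩ := Set.mem_iUnion.1 ha
  have hext_le : ∀ ⦃i j⦄, i ≤ j → IsSumEndExtension (H i) (H j) :=
    Nat.rel_of_forall_rel_succ_of_le IsSumEndExtension hext
  refine (hfin m).subset ?_
  rintro b ⟨hb, hab⟩
  obtain ⟨i, hbi⟩ := Set.mem_iUnion.1 hb
  obtain ⟨j, habj⟩ := Set.mem_iUnion.1 hab
  exact ((hext_le (show m ≤ m + (i + j) by omega)).mem_of_add_mem a ham b
    ((hext_le (by omega)).subset hbi) ((hext_le (by omega)).subset habj)).1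

end SumEndExtension

section ThinSets

variable {S : Type*} [AddSemigroup S] [IsCancelAdd S]

theorem exists_mem_ultrafilter_forall_add_notMem (u : Ultrafilter S) {H : Set S} (hH : H.Finite)
    (hne : ∀ a ∈ H, a + a ≠ a) : ∃ W ∈ u, ∀ a ∈ H, ∀ b ∈ W, a + b ∉ W := by
  have hshift (a : S) (ha : a ∈ H) : ∃ W ∈ u, Set.MapsTo (a + ·) W Wᶜ :=
    exists_mem_ultrafilter_mapsTo_compl u (add_right_injective a)
      fun _ hb => hne a ha (add_self_eq_self_of_add_eq_right hb)
  choose! W hWu hW using hshift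
  refine ⟨⋂ a ∈ H, W a, (Filter.biInter_mem hH).2 hWu, fun a ha b hb hab => ?_⟩
  exact hW a ha (Set.mem_iInter₂.1 hb a ha) (Set.mem_iInter₂.1 hab a ha)

theorem IsFreeUltrafilter.exists_mem_forall_isSumEndExtension_union {u : Ultrafilter S}
    (hu : IsFreeUltrafilter u) {H : Set S} (hH : H.Finite) (hne : ∀ a ∈ H, a + a ≠ a) :
    ∃ W ∈ u, ∀ G ⊆ W, IsSumEndExtension H (H ∪ G) := by
  obtain ⟨W, hWu, hW⟩ := exists_mem_ultrafilter_forall_add_notMem u hH hne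
  have hsums : (Set.image2 (· + ·) H H).Finite := hH.image2 _ hH
  have hdiffs : (⋃ a ∈ H, (a + ·) ⁻¹' H).Finite :=
    hH.biUnion fun a _ => hH.preimage (add_right_injective a).injOn
  have havoid := Filter.inter_mem (hu.compl_mem_of_finite hsums) (hu.compl_mem_of_finite hdiffs)
  refine ⟨_, Filter.inter_mem hWu havoid, fun G hG => ⟨Set.subset_union_left, ?_⟩⟩
  rintro a ha b (hb | hb) (hab | hab)
  · exact ⟨hb, hab⟩
  · exact absurd (Set.mem_image2_of_mem ha hb) (hG hab).2.1
  · exact absurd (Set.mem_biUnion ha hab) (hG hb).2.2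
  · exact absurd (hG hab).1 (hW a ha b (hG hb).1)

theorem exists_isSumEndExtension_isSchurRegular {κ : Type*} [Finite κ] {u : Ultrafilter S}
    (hfree : IsFreeUltrafilter u) (hschur : IsSchurUltrafilter u) {U H : Set S} (hU : U ∈ u)
    (hH : H.Finite) (hHU : H ⊆ U) (hne : ∀ a ∈ H, a + a ≠ a) :
    ∃ K ⊆ U, K.Finite ∧ IsSumEndExtension H K ∧ IsSchurRegular κ K := by
  obtain ⟨W, hWu, hW⟩ := hfree.exists_mem_forall_isSumEndExtension_union hH hne
  obtain ⟨G, hGUW, hGfin, hG⟩ :=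
    (hschur.isSchurRegular (κ := κ) (Filter.inter_mem hU hWu)).exists_finite_subset
  obtain ⟨hGU, hGW⟩ := Set.subset_inter_iff.1 hGUW
  exact ⟨H ∪ G, Set.union_subset hHU hGU, hH.union hGfin, hW G hGW, hG.mono Set.subset_union_right⟩

theorem exists_subset_isSchurRegular_hasFiniteSchurFibers {u : Ultrafilter S}
    (hfree : IsFreeUltrafilter u) (hschur : IsSchurUltrafilter u) {U : Set S} (hU : U ∈ u)
    (hne : ∀ a ∈ U, a + a ≠ a) :
    ∃ V ⊆ U, (∀ n, IsSchurRegular (Fin n) V) ∧ HasFiniteSchurFibers V := by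
  have hstep (n : ℕ) (H : {H : Set S // H ⊆ U ∧ H.Finite}) :
      ∃ K : {K : Set S // K ⊆ U ∧ K.Finite},
        IsSumEndExtension H.1 K.1 ∧ IsSchurRegular (Fin n) K.1 := by
    obtain ⟨K, hKU, hKfin, hK⟩ := exists_isSumEndExtension_isSchurRegular (κ := Fin n)
      hfree hschur hU H.2.2 H.2.1 fun a ha => hne a (H.2.1 ha)
    exact ⟨⟨K, hKU, hKfin⟩, hK⟩
  choose next hext hreg using hstep
  let H (n : ℕ) : {H : Set S // H ⊆ U ∧ H.Finite} :=
    Nat.rec ⟨∅, Set.empty_subset U, Set.finite_empty⟩ next n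
  refine ⟨⋃ n, (H n).1, Set.iUnion_subset fun n => (H n).2.1, fun n => ?_, ?_⟩
  · exact (hreg n (H n)).mono (Set.subset_iUnion (fun n => (H n).1) (n + 1))
  · exact hasFiniteSchurFibers_iUnion (fun n => (H n).2.2) fun n => hext n (H n)

theorem exists_mem_not_isInfSchurUltrafilter {u : Ultrafilter S} (hfree : IsFreeUltrafilter u)
    (hschur : IsSchurUltrafilter u) {U : Set S} (hU : U ∈ u) :
    ∃ v : Ultrafilter S, U ∈ v ∧ (IsFreeUltrafilter v ∧ IsSchurUltrafilter v) ∧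
      ¬ IsInfSchurUltrafilter v := by
  have hidem : {a : S | a + a = a}ᶜ ∈ u :=
    hfree.compl_mem_of_finite subsingleton_setOf_add_self_eq_self.finite
  obtain ⟨V, hVU, hreg, hfib⟩ := exists_subset_isSchurRegular_hasFiniteSchurFibers hfree hschur
    (Filter.inter_mem hU hidem) fun _ ha => ha.2
  obtain ⟨v, hVv, hv⟩ := exists_isSchurUltrafilter_mem_of_isSchurRegular hreg
  have hUv : U ∈ v := Filter.mem_of_superset hVv fun _ ha => (hVU ha).1
  have hvfree : IsFreeUltrafilter v := hv.isFreeUltrafilter_of_mem hVv fun _ ha => (hVU ha).2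
  exact ⟨v, hUv, ⟨hvfree, hv⟩, hfib.not_isInfSchurUltrafilter hVv⟩

end ThinSets

theorem isOpen_setOf_not_isInfSchurUltrafilter {S : Type*} [Add S] :
    IsOpen {u : Ultrafilter S | ¬ IsInfSchurUltrafilter u} := by
  refine isOpen_iff_forall_mem_open.2 fun u hu => ?_
  obtain ⟨U, hU, hUinf⟩ := not_forall₂.1 hu
  exact ⟨{v | U ∈ v}, fun v hv hinf => hUinf (hinf U hv), ultrafilter_isOpen_basic U, hU⟩

theorem schFin_isOpen_and_dense_general {S : Type*} [AddSemigroup S] [IsCancelAdd S] :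
    IsOpen {v : {u : Ultrafilter S // IsFreeUltrafilter u ∧ IsSchurUltrafilter u} |
        ¬ IsInfSchurUltrafilter v.1} ∧
      Dense {v : {u : Ultrafilter S // IsFreeUltrafilter u ∧ IsSchurUltrafilter u} |
        ¬ IsInfSchurUltrafilter v.1} := by
  refine ⟨isOpen_setOf_not_isInfSchurUltrafilter.preimage continuous_subtype_val, ?_⟩
  refine (ultrafilterBasis_is_basis.isInducing .subtypeVal).dense_iff.2 ?_
  rintro _ ⟨_, ⟨U, rfl⟩, rfl⟩ ⟨u, hU⟩
  obtain ⟨v, hUv, hv, hfin⟩ := exists_mem_not_isInfSchurUltrafilter u.2.1 u.2.2 hU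
  exact ⟨⟨v, hv⟩, hUv, hfin⟩

/-- The set `Sch^fin(ℤ)` of free Schur ultrafilters on `ℤ` which are not infinitary
Schur is an open dense subset of `Sch(ℤ)`. -/
theorem schFin_isOpen_and_dense :
    IsOpen {v : SchZ | ¬ IsInfSchurUltrafilter v.1} ∧
      Dense {v : SchZ | ¬ IsInfSchurUltrafilter v.1} :=
  schFin_isOpen_and_dense_general
end

section
/- There exists a free Schur ultrafilter on ℤ that is not an infinitary Schur ultrafilter. -/
/-!
Let `q` be a Schur ultrafilter on the positive integers and let `u` be the limit, first as `n → ∞`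
along a free ultrafilter and then as `k → q`, of the integers `k * n !`. Every map `k ↦ k * n !` is
additive, so `u` inherits the Schur property from `q`; and `u` contains the set `F` of all `k * n !`
with `0 < k ≤ n`. If `a = k * m !` and `b = l * n !` lie in `F` with `m < n`, then
`0 < a < n ! ≤ b`, so `a + b` is not a multiple of `n !`, whereas all elements of `F` above `n !`
are. Hence only finitely many `b ∈ F` satisfy `a + b ∈ F`.
-/

open Filter
open scoped Nat

section Semigroup

variable {S : Type*}

section Idempotent

attribute [local instance] Ultrafilter.add Ultrafilter.addSemigroup

theorem isSchurUltrafilter_of_add_self_eq [Add S] {u : Ultrafilter S} (hu : u + u = u) :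
    IsSchurUltrafilter u := by
  intro U hU
  have h_sum : ∀ᶠ a in u, ∀ᶠ b in u, a + b ∈ U := by
    rw [← Ultrafilter.eventually_add, hu]
    exact hU
  obtain ⟨a, haU, ha⟩ := (Eventually.and hU h_sum).exists
  obtain ⟨b, hbU, hab⟩ := (Eventually.and hU ha).exists
  exact ⟨a, haU, b, hbU, hab⟩

theorem exists_isSchurUltrafilter (S : Type*) [AddSemigroup S] [Nonempty S] :
    ∃ u : Ultrafilter S, IsSchurUltrafilter u :=
  (exists_idempotent_of_compact_t2_of_continuous_add_left Ultrafilter.continuous_add_left).imp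
    fun _ hu ↦ isSchurUltrafilter_of_add_self_eq hu

end Idempotent

variable [Add S]

theorem IsSchurUltrafilter.bind_map_addHom {M ι : Type*} [Add M] {q : Ultrafilter M}
    (hq : IsSchurUltrafilter q) (v : Ultrafilter ι) (f : ι → M →ₙ+ S) :
    IsSchurUltrafilter (q.bind fun k ↦ v.map fun i ↦ f i k) := by
  intro U hU
  obtain ⟨a, ha, b, hb, hab⟩ := hq {k | ∀ᶠ i in v, f i k ∈ U} hU
  obtain ⟨i, hia, hib, hiab⟩ := (ha.and (hb.and hab)).exists
  exact ⟨f i a, hia, f i b, hib, map_add (f i) a b ▸ hiab⟩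

theorem IsSchurUltrafilter.isFreeUltrafilter {u : Ultrafilter S} (hu : IsSchurUltrafilter u)
    (h_add_self : {x : S | x + x ≠ x} ∈ u) : IsFreeUltrafilter u := by
  intro A hA hA_fin
  obtain ⟨x, -, rfl⟩ := Ultrafilter.eq_pure_of_finite_mem hA_fin hA
  obtain ⟨_, rfl, _, rfl, hxx⟩ := hu {x} (Ultrafilter.mem_pure.2 rfl)
  exact Ultrafilter.mem_pure.1 h_add_self hxx

theorem not_isInfSchurUltrafilter_of_finite {u : Ultrafilter S} {U : Set S} (hU : U ∈ u)
    (h_fin : ∀ a ∈ U, {b ∈ U | a + b ∈ U}.Finite) : ¬ IsInfSchurUltrafilter u := by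
  intro hu
  obtain ⟨a, ha, B, hBU, hB_inf, hB⟩ := hu U hU
  exact hB_inf ((h_fin a ha).subset fun b hb ↦ ⟨hBU hb, hB b hb⟩)

end Semigroup

theorem mul_factorial_lt_factorial {k m n : ℕ} (hkm : k ≤ m) (hmn : m < n) : k * m ! < n ! :=
  calc
    k * m ! < (m + 1) * m ! := by gcongr; lia
    _ = (m + 1)! := (Nat.factorial_succ m).symm
    _ ≤ n ! := Nat.factorial_le hmn

theorem le_of_mul_factorial_add_eq {k m l n j r : ℕ} (hk : 0 < k) (hkm : k ≤ m) (hl : 0 < l)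
    (hjr : j ≤ r) (h : k * m ! + l * n ! = j * r !) : n ≤ m := by
  by_contra! hmn
  have h_lt : k * m ! < n ! := mul_factorial_lt_factorial hkm hmn
  have h_pos : 0 < k * m ! := by positivity
  rcases lt_or_ge r n with hrn | hnr
  · have h_sum_lt : j * r ! < n ! := mul_factorial_lt_factorial hjr hrn
    have h_le : n ! ≤ l * n ! := Nat.le_mul_of_pos_left _ hl
    lia
  · have h_dvd_sum : n ! ∣ k * m ! + l * n ! :=
      h ▸ (Nat.factorial_dvd_factorial hnr).mul_left j
    have h_dvd : n ! ∣ k * m ! := (Nat.dvd_add_left (Nat.dvd_mul_left _ l)).1 h_dvd_sum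
    exact Nat.not_dvd_of_pos_of_lt h_pos h_lt h_dvd

/-- The integers `k * n !` with `0 < k ≤ n`: the member of the constructed ultrafilter at which the
infinitary Schur property fails. The bound `k ≤ n` keeps `k * n !` below `(n + 1)!`. -/
def smallFactorialMultiples : Set ℤ :=
  {x | ∃ k n : ℕ, 0 < k ∧ k ≤ n ∧ ((k * n ! : ℕ) : ℤ) = x}

theorem pos_of_mem_smallFactorialMultiples {x : ℤ} (hx : x ∈ smallFactorialMultiples) : 0 < x := by
  obtain ⟨k, n, hk, -, rfl⟩ := hx
  positivity

theorem finite_setOf_add_mem_smallFactorialMultiples {a : ℤ} (ha : a ∈ smallFactorialMultiples) :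
    {b ∈ smallFactorialMultiples | a + b ∈ smallFactorialMultiples}.Finite := by
  obtain ⟨k, m, hk, hkm, rfl⟩ := ha
  refine (Set.finite_Icc (0 : ℤ) (m * m ! : ℕ)).subset ?_
  rintro _ ⟨⟨l, n, hl, hln, rfl⟩, j, r, -, hjr, h_sum⟩
  have hnm : n ≤ m := le_of_mul_factorial_add_eq hk hkm hl hjr (by exact_mod_cast h_sum.symm)
  have h_le : l * n ! ≤ m * m ! := Nat.mul_le_mul (hln.trans hnm) (Nat.factorial_le hnm)
  exact ⟨Int.natCast_nonneg _, by exact_mod_cast h_le⟩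

/-- The additive map `k ↦ k * n !`. It is defined on `ℕ+` only, so that an arbitrary ultrafilter on
its domain concentrates on nonzero multiples of `n !`. -/
def mulFactorialHom (n : ℕ) : ℕ+ →ₙ+ ℤ where
  toFun k := ((k * n ! : ℕ) : ℤ)
  map_add' a b := by
    push_cast
    ring

theorem smallFactorialMultiples_mem_bind_hyperfilter (q : Ultrafilter ℕ+) :
    smallFactorialMultiples ∈ q.bind fun k ↦ (hyperfilter ℕ).map fun n ↦ mulFactorialHom n k := by
  have h_mem (k : ℕ+) : ∀ᶠ n in hyperfilter ℕ, mulFactorialHom n k ∈ smallFactorialMultiples := by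
    filter_upwards [Nat.hyperfilter_le_atTop (eventually_ge_atTop (k : ℕ))] with n hkn
    exact ⟨k, n, k.pos, hkn, rfl⟩
  exact Eventually.of_forall (f := (q : Filter ℕ+)) h_mem

/-- There exists a free Schur ultrafilter on `ℤ` that is not infinitary Schur. -/
theorem exists_free_schur_not_infSchur :
    ∃ u : Ultrafilter ℤ, IsFreeUltrafilter u ∧ IsSchurUltrafilter u ∧
      ¬ IsInfSchurUltrafilter u := by
  obtain ⟨q, hq⟩ := exists_isSchurUltrafilter ℕ+
  let u : Ultrafilter ℤ := q.bind fun k ↦ (hyperfilter ℕ).map fun n ↦ mulFactorialHom n k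
  have hu : IsSchurUltrafilter u := hq.bind_map_addHom (hyperfilter ℕ) mulFactorialHom
  have hF : smallFactorialMultiples ∈ u := smallFactorialMultiples_mem_bind_hyperfilter q
  have h_add_self : {x : ℤ | x + x ≠ x} ∈ u := mem_of_superset hF fun x hx ↦
    (lt_add_of_pos_left x (pos_of_mem_smallFactorialMultiples hx)).ne'
  exact ⟨u, hu.isFreeUltrafilter h_add_self, hu,
    not_isInfSchurUltrafilter_of_finite hF fun _ ↦ finite_setOf_add_mem_smallFactorialMultiples⟩
end

section
/- Assume the Continuum Hypothesis. Then the set Sch^p(ℤ) of all free Schur ultrafilters on ℤ which are P-points is dense in the space Sch(ℤ) of all free Schur ultrafilters on ℤ, where the space of all ultrafilters on ℤ carries the Stone topology and Sch(ℤ) carries the subspace topology. -/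
/-- An ultrafilter `u` on a countable set is a *P-point* if for every countable
family `{U n : n ∈ ℕ} ⊆ u` there exists `U ∈ u` with `U \ U n` finite for all `n`. -/
def IsPPoint {X : Type*} (u : Ultrafilter X) : Prop :=
  ∀ f : ℕ → Set X, (∀ n, f n ∈ u) → ∃ U ∈ u, ∀ n, (U \ f n).Finite

/-!
Call a set *large* if it is not covered by finitely many sets each of which contains no edge, where
the edges are the finite sets with at least two points that contain a Schur triple. The free Schur
ultrafilters are exactly those all of whose members are large. By compactness, a set that cannot be
covered by `k` edge-free sets has a finite subset that already cannot. Gluing such finite pieces for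
`k = 0, 1, 2, …` together, every decreasing sequence of large sets has a large pseudo-intersection.
So the large sets, ordered by almost inclusion, form a `σ`-closed preorder, and under CH one can
descend, below any given large set, through `ℵ₁` dense subsets of it, one for every sequence of
sets. Any ultrafilter of large sets that contains all the sets met on the way is a P-point.
-/

open Cardinal Filter Set

universe u w

section SigmaClosed

/-- A preorder is `σ`-closed, in the sense of forcing, if every descending sequence has a lower
bound. -/
def IsSigmaClosed (P : Type*) [Preorder P] : Prop :=
  ∀ f : ℕ → P, Antitone f → BddBelow (range f)

variable {P ι : Type*} [Preorder P]

theorem IsSigmaClosed.bddBelow_range (hP : IsSigmaClosed P) [Preorder ι] [IsDirectedOrder ι]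
    [Nonempty ι] [Countable ι] {f : ι → P} (hf : Antitone f) : BddBelow (range f) := by
  obtain ⟨x, hx_mono, hx_tendsto⟩ := exists_seq_monotone_tendsto_atTop_atTop ι
  obtain ⟨q, hq⟩ := hP (f ∘ x) (hf.comp_monotone hx_mono)
  refine ⟨q, forall_mem_range.2 fun i => ?_⟩
  obtain ⟨n, hn⟩ := (hx_tendsto.eventually_ge_atTop i).exists
  exact (hq (mem_range_self n)).trans (hf hn)

theorem IsSigmaClosed.bddBelow_insert_range (hP : IsSigmaClosed P) [LinearOrder ι] [Countable ι]
    {f : ι → P} (hf : Antitone f) {p : P} (hp : ∀ i, f i ≤ p) :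
    BddBelow (insert p (range f)) := by
  rcases isEmpty_or_nonempty ι with _ | ⟨⟨i⟩⟩
  · rw [range_eq_empty, insert_empty_eq]
    exact bddBelow_singleton
  · have : Nonempty ι := ⟨i⟩
    obtain ⟨q, hq⟩ := hP.bddBelow_range hf
    exact ⟨q, forall_mem_insert.2 ⟨(hq (mem_range_self i)).trans (hp i), hq⟩⟩

theorem IsSigmaClosed.exists_antitone_forall_mem (hP : IsSigmaClosed P) [LinearOrder ι]
    [WellFoundedLT ι] (hι : ∀ i : ι, (Iio i).Countable) {D : ι → Set P}
    (hD : ∀ i p, ∃ q ∈ D i, q ≤ p) (p : P) :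
    ∃ T : ι → P, Antitone T ∧ ∀ i, T i ∈ D i ∧ T i ≤ p := by
  have step (i : ι) (S : Set P) (hS : BddBelow S) : ∃ q ∈ D i, q ∈ lowerBounds S := by
    obtain ⟨b, hb⟩ := hS
    obtain ⟨q, hqD, hqb⟩ := hD i b
    exact ⟨q, hqD, fun s hs => hqb.trans (hb hs)⟩
  have : Nonempty P := ⟨p⟩
  choose! next next_mem next_le using step
  let T : ι → P := wellFounded_lt.fix fun i T' =>
    next i (insert p (range fun j : Iio i => T' j j.2))
  have T_eq (i : ι) : T i = next i (insert p (range fun j : Iio i => T j)) :=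
    wellFounded_lt.fix_eq _ i
  have bdd (i : ι) : BddBelow (insert p (range fun j : Iio i => T j)) := by
    induction i using WellFoundedLT.induction with
    | _ i ih =>
      have T_le (j : Iio i) : T j ∈ lowerBounds (insert p (range fun k : Iio j.1 => T k)) :=
        T_eq j ▸ next_le j _ (ih j j.2)
      have : Countable (Iio i) := hι i
      exact hP.bddBelow_insert_range
        (antitone_iff_forall_lt.2 fun j k hjk => T_le k (mem_insert_of_mem _ ⟨⟨j, hjk⟩, rfl⟩))
        fun j => T_le j (mem_insert p _)
  have T_le (i : ι) : T i ∈ lowerBounds (insert p (range fun j : Iio i => T j)) :=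
    T_eq i ▸ next_le i _ (bdd i)
  exact ⟨T, antitone_iff_forall_lt.2 fun j i hji => T_le i (mem_insert_of_mem _ ⟨⟨j, hji⟩, rfl⟩),
    fun i => ⟨T_eq i ▸ next_mem i _ (bdd i), T_le i (mem_insert p _)⟩⟩

theorem IsSigmaClosed.exists_directed_forall_mem (hP : IsSigmaClosed P) (hι : #ι ≤ ℵ₁)
    {D : ι → Set P} (hD : ∀ i p, ∃ q ∈ D i, q ≤ p) (p : P) :
    ∃ T : ι → P, Directed (· ≥ ·) T ∧ ∀ i, T i ∈ D i ∧ T i ≤ p := by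
  classical
  obtain ⟨r, _, hr⟩ := exists_ord_eq ι
  let := linearOrderOfSTO r
  have : WellFoundedLT ι := ⟨IsWellFounded.wf (r := r)⟩
  have countable_Iio (i : ι) : (Iio i).Countable :=
    le_aleph0_iff_set_countable.1 (lt_aleph_one_iff.1 ((mk_Iio_lt i hr).trans_le hι))
  obtain ⟨T, hT, hTD⟩ := hP.exists_antitone_forall_mem countable_Iio hD p
  exact ⟨T, hT.directed_ge, hTD⟩

end SigmaClosed

section PositiveSets

variable {X : Type*} {F : Filter X} {A B : Set X}

/-- The filter dual to a `P⁺`-ideal: every decreasing sequence of `F`-positive sets has an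
`F`-positive pseudo-intersection. A set `A` is `F`-positive if its complement is not in `F`, which
is the proposition `∃ᶠ x in F, x ∈ A`. -/
def IsPPlusFilter (F : Filter X) : Prop :=
  ∀ f : ℕ → Set X, Antitone f → (∀ n, ∃ᶠ x in F, x ∈ f n) →
    ∃ A, (∃ᶠ x in F, x ∈ A) ∧ ∀ n, (A \ f n).Finite

/-- The forcing notion of `F`-positive sets, preordered by inclusion up to finitely many points. -/
def PositiveSet (F : Filter X) : Type _ :=
  {A : Set X // ∃ᶠ x in F, x ∈ A}

theorem finite_sdiff_trans {C : Set X} (hAB : (A \ B).Finite) (hBC : (B \ C).Finite) :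
    (A \ C).Finite :=
  (hAB.union hBC).subset (sdiff_triangle A B C)

instance : Preorder (PositiveSet F) where
  le A B := (A.1 \ B.1).Finite
  le_refl A := by simp
  le_trans _ _ _ := finite_sdiff_trans

theorem PositiveSet.le_of_subset {A B : PositiveSet F} (h : A.1 ⊆ B.1) : A ≤ B :=
  finite_empty.subset (sdiff_eq_empty.2 h).subset

theorem eventually_imp_of_finite_sdiff (hF : F ≤ cofinite) (h : (A \ B).Finite) :
    ∀ᶠ x in F, x ∈ A → x ∈ B :=
  mem_of_superset (hF h.compl_mem_cofinite) fun _ hx hA => not_not.1 fun hB => hx ⟨hA, hB⟩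

theorem IsPPlusFilter.exists_pseudoIntersection (hFP : IsPPlusFilter F) {f : ℕ → Set X}
    (hf : ∀ n, ∃ᶠ x in F, ∀ j ≤ n, x ∈ f j) :
    ∃ A, (∃ᶠ x in F, x ∈ A) ∧ ∀ n, (A \ f n).Finite := by
  obtain ⟨A, hA, hAf⟩ := hFP (dissipate f) antitone_dissipate (by simpa [mem_dissipate] using hf)
  exact ⟨A, hA, fun n => (hAf n).subset (sdiff_subset_sdiff_right (dissipate_subset le_rfl))⟩

theorem IsPPlusFilter.isSigmaClosed_positiveSet (hFP : IsPPlusFilter F) (hF : F ≤ cofinite) :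
    IsSigmaClosed (PositiveSet F) := by
  intro f hf
  have hpos (n : ℕ) : ∃ᶠ x in F, ∀ j ≤ n, x ∈ (f j).1 := by
    have hsub : ∀ᶠ x in F, ∀ j ≤ n, x ∈ (f n).1 → x ∈ (f j).1 :=
      (eventually_all_finite (finite_Iic n)).2 fun j hj =>
        eventually_imp_of_finite_sdiff hF (hf hj)
    exact ((f n).2.and_eventually hsub).mono fun x hx j hj => hx.2 j hj hx.1
  obtain ⟨A, hA, hAf⟩ := hFP.exists_pseudoIntersection hpos
  exact ⟨⟨A, hA⟩, forall_mem_range.2 hAf⟩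

/-- The positive sets that decide a sequence `f` of sets: either they are almost contained in all
its terms or they miss one of them. A generic ultrafilter meeting this set for all `f` is a
P-point. -/
def decidingSets (F : Filter X) (f : ℕ → Set X) : Set (PositiveSet F) :=
  {A | (∀ n, (A.1 \ f n).Finite) ∨ ∃ n, Disjoint A.1 (f n)}

theorem IsPPlusFilter.exists_mem_decidingSets_le (hFP : IsPPlusFilter F) (f : ℕ → Set X)
    (A : PositiveSet F) : ∃ B ∈ decidingSets F f, B ≤ A := by
  by_cases hmiss : ∃ n, ∃ᶠ x in F, x ∈ A.1 \ f n
  · obtain ⟨n, hn⟩ := hmiss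
    exact ⟨⟨A.1 \ f n, hn⟩, Or.inr ⟨n, disjoint_sdiff_left⟩,
      PositiveSet.le_of_subset sdiff_subset⟩
  · have hmem (n : ℕ) : ∀ᶠ x in F, x ∈ A.1 → x ∈ f n := by
      simpa using not_exists.1 hmiss n
    have hpos (n : ℕ) : ∃ᶠ x in F, ∀ j ≤ n, x ∈ A.1 ∩ f j :=
      (A.2.and_eventually ((eventually_all_finite (finite_Iic n)).2 fun j _ => hmem j)).mono
        fun x hx j hj => ⟨hx.1, hx.2 j hj hx.1⟩
    obtain ⟨B, hB, hBf⟩ := hFP.exists_pseudoIntersection hpos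
    exact ⟨⟨B, hB⟩, Or.inl fun n => (hBf n).subset (sdiff_subset_sdiff_right inter_subset_right),
      (hBf 0).subset (sdiff_subset_sdiff_right inter_subset_left)⟩

theorem exists_ultrafilter_le_forall_mem_of_directed (hF : F ≤ cofinite) {ι : Type*} [Nonempty ι]
    {T : ι → PositiveSet F} (hT : Directed (· ≥ ·) T) :
    ∃ u : Ultrafilter X, ↑u ≤ F ∧ ∀ i, (T i).1 ∈ u := by
  have hmono {A B : PositiveSet F} (hAB : A ≤ B) : F ⊓ 𝓟 A.1 ≤ F ⊓ 𝓟 B.1 :=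
    le_inf inf_le_left (le_principal_iff.2
      (mem_inf_principal.2 (eventually_imp_of_finite_sdiff hF hAB)))
  have : NeBot (⨅ i, F ⊓ 𝓟 (T i).1) :=
    iInf_neBot_of_directed' (hT.mono_comp (g := fun A => F ⊓ 𝓟 A.1) _ fun _ _ => hmono)
      fun i => frequently_mem_iff_neBot.1 (T i).2
  have hle (i : ι) : ↑(Ultrafilter.of (⨅ i, F ⊓ 𝓟 (T i).1)) ≤ F ⊓ 𝓟 (T i).1 :=
    (Ultrafilter.of_le _).trans (iInf_le _ i)
  exact ⟨_, (hle (Classical.arbitrary ι)).trans inf_le_left,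
    fun i => le_principal_iff.1 ((hle i).trans inf_le_right)⟩

theorem IsPPlusFilter.exists_isPPoint_le (hFP : IsPPlusFilter F) (hF : F ≤ cofinite)
    (hX : #(ℕ → Set X) ≤ ℵ₁) (hA : ∃ᶠ x in F, x ∈ A) :
    ∃ u : Ultrafilter X, ↑u ≤ F ∧ A ∈ u ∧ IsPPoint u := by
  obtain ⟨T, hT, hTD⟩ := (hFP.isSigmaClosed_positiveSet hF).exists_directed_forall_mem hX
    hFP.exists_mem_decidingSets_le ⟨A, hA⟩
  obtain ⟨u, huF, huT⟩ := exists_ultrafilter_le_forall_mem_of_directed hF hT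
  refine ⟨u, huF, ?_, fun f hf => ⟨(T f).1, huT f, ?_⟩⟩
  · let f : ℕ → Set X := fun _ => ∅
    filter_upwards [huT f, eventually_imp_of_finite_sdiff (huF.trans hF) (hTD f).2]
      with x hxT hx using hx hxT
  · refine (hTD f).1.resolve_right fun ⟨n, hn⟩ => ?_
    exact u.empty_notMem (hn.inter_eq ▸ inter_mem (huT f) (hf n))

end PositiveSets

section EdgeFree

variable {X : Type*} {E : Set (Finset X)} {k : ℕ} {A B : Set X}

/-- `A` is an independent set of the hypergraph with the finite edges `E`. -/
def IsEdgeFree (E : Set (Finset X)) (A : Set X) : Prop :=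
  ∀ e ∈ E, ¬ (e : Set X) ⊆ A

/-- The hypergraph induced by `E` on `A` is `k`-colourable; a colouring is recorded as a cover of
`A` by `k` sets without edges, which need not be disjoint nor contained in `A`. -/
def HasEdgeFreeCover (E : Set (Finset X)) (k : ℕ) (A : Set X) : Prop :=
  ∃ C : Fin k → Set X, (∀ i, IsEdgeFree E (C i)) ∧ A ⊆ ⋃ i, C i

/-- The filter dual to the ideal generated by the sets without edges. -/
def edgeFilter (E : Set (Finset X)) : Filter X :=
  generate {B | IsEdgeFree E Bᶜ}

theorem HasEdgeFreeCover.mono (hB : HasEdgeFreeCover E k B) (hAB : A ⊆ B) :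
    HasEdgeFreeCover E k A :=
  let ⟨C, hC, hBC⟩ := hB
  ⟨C, hC, hAB.trans hBC⟩

theorem hasEdgeFreeCover_of_forall_finite
    (h : ∀ s ⊆ A, s.Finite → HasEdgeFreeCover E k s) : HasEdgeFreeCover E k A := by
  rcases A.eq_empty_or_nonempty with rfl | ⟨a, ha⟩
  · exact h ∅ subset_rfl finite_empty
  choose C hC hcover using fun s : Finset X => h (A ∩ s) inter_subset_left
    (s.finite_toSet.inter_of_right A)
  have : Nonempty (Fin k) :=
    ⟨(mem_iUnion.1 (hcover {a} ⟨ha, Finset.mem_coe.2 (Finset.mem_singleton_self a)⟩)).choose⟩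
  have hcolour (s : Finset X) (x : X) (hx : x ∈ A ∩ s) : ∃ i, x ∈ C s i :=
    mem_iUnion.1 (hcover s hx)
  choose! c hc using hcolour
  obtain ⟨χ, hχ⟩ := Finset.rado_selection c
  refine ⟨fun i => A ∩ χ ⁻¹' {i}, fun i e he hei => ?_, fun x hx => by simpa using hx⟩
  obtain ⟨t, het, hχt⟩ := hχ e
  refine hC t i e he fun x hx => ?_
  have hxi : c t x = i := (hχt x hx).symm.trans (hei hx).2
  exact hxi ▸ hc t x ⟨(hei hx).1, het hx⟩

theorem compl_mem_edgeFilter_iff : Aᶜ ∈ edgeFilter E ↔ ∃ k, HasEdgeFreeCover E k A := by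
  constructor
  · intro hA
    obtain ⟨t, htE, ht, htA⟩ := mem_generate_iff.1 hA
    have := ht.to_subtype
    obtain ⟨k, ⟨e⟩⟩ := Finite.exists_equiv_fin t
    refine ⟨k, fun i => (e.symm i).1ᶜ, fun i => htE (e.symm i).2, fun x hx => ?_⟩
    obtain ⟨B, hB, hxB⟩ : ∃ B ∈ t, x ∉ B := by
      simpa using fun hxt => htA hxt hx
    exact mem_iUnion.2 ⟨e ⟨B, hB⟩, by simpa using hxB⟩
  · rintro ⟨k, C, hC, hAC⟩
    have hCompl (i : Fin k) : (C i)ᶜ ∈ edgeFilter E :=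
      mem_generate_of_mem (by simpa using hC i)
    filter_upwards [iInter_mem.2 hCompl] with x hx hxA
    obtain ⟨i, hi⟩ := mem_iUnion.1 (hAC hxA)
    exact mem_iInter.1 hx i hi

theorem frequently_edgeFilter_iff :
    (∃ᶠ x in edgeFilter E, x ∈ A) ↔ ∀ k, ¬ HasEdgeFreeCover E k A := by
  rw [← not_exists, ← compl_mem_edgeFilter_iff]
  rfl

theorem isPPlusFilter_edgeFilter : IsPPlusFilter (edgeFilter E) := by
  intro f hf hpos
  have hfinite (n : ℕ) : ∃ s ⊆ f n, s.Finite ∧ ¬ HasEdgeFreeCover E n s := by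
    by_contra! h
    exact frequently_edgeFilter_iff.1 (hpos n) n (hasEdgeFreeCover_of_forall_finite h)
  choose s hsf hs hcover using hfinite
  refine ⟨⋃ n, s n, frequently_edgeFilter_iff.2 fun k hk =>
    hcover k (hk.mono (subset_iUnion s k)), fun n => ?_⟩
  refine ((finite_Iio n).biUnion fun m _ => hs m).subset fun x ⟨hx, hxn⟩ => ?_
  obtain ⟨m, hm⟩ := mem_iUnion.1 hx
  exact mem_biUnion (not_le.1 fun hnm => hxn (hf hnm (hsf m hm))) hm

theorem edgeFilter_le_cofinite (hE : ∀ e ∈ E, e.Nontrivial) : edgeFilter E ≤ cofinite := by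
  refine le_cofinite_iff_compl_singleton_mem.2 fun x => mem_generate_of_mem fun e he hex => ?_
  rw [compl_compl] at hex
  exact (hE e he).not_subset_singleton (Finset.coe_subset.1 (by simpa using hex))

theorem ultrafilter_le_edgeFilter_iff {u : Ultrafilter X} :
    ↑u ≤ edgeFilter E ↔ ∀ U ∈ u, ∃ e ∈ E, (e : Set X) ⊆ U := by
  rw [edgeFilter, le_generate_iff]
  constructor
  · intro h U hU
    by_contra! hfree
    exact Ultrafilter.compl_notMem_iff.2 hU (h (by simpa [IsEdgeFree] using hfree))
  · intro h B hB
    by_contra hBu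
    obtain ⟨e, he, heB⟩ := h _ (Ultrafilter.compl_mem_iff_notMem.2 hBu)
    exact hB e he heB

end EdgeFree

section Schur

variable {S : Type*} [Add S]

/-- The finite sets with at least two points that contain a Schur triple `a, b, a + b`. The second
point rules out principal ultrafilters at an idempotent, such as `0`. -/
def schurEdges (S : Type*) [Add S] : Set (Finset S) :=
  {e | e.Nontrivial ∧ ∃ a ∈ e, ∃ b ∈ e, a + b ∈ e}

theorem isFree_and_isSchur_iff_le_edgeFilter {u : Ultrafilter S} :
    IsFreeUltrafilter u ∧ IsSchurUltrafilter u ↔ ↑u ≤ edgeFilter (schurEdges S) := by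
  classical
  constructor
  · rintro ⟨hfree, hschur⟩
    refine ultrafilter_le_edgeFilter_iff.2 fun U hU => ?_
    obtain ⟨a, ha, b, hb, hab⟩ := hschur U hU
    obtain ⟨x, hx, y, hy, hxy⟩ := (show U.Infinite from hfree U hU).nontrivial
    refine ⟨{a, b, a + b, x, y},
      ⟨⟨x, by simp, y, by simp, hxy⟩, a, by simp, b, by simp, by simp⟩, ?_⟩
    simp [insert_subset_iff, *]
  · intro hu
    refine ⟨fun U hU hfin => ?_, fun U hU => ?_⟩
    · exact Ultrafilter.compl_notMem_iff.2 hU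
        (hu.trans (edgeFilter_le_cofinite fun e he => he.1) hfin.compl_mem_cofinite)
    · obtain ⟨e, ⟨-, a, ha, b, hb, hab⟩, heU⟩ := ultrafilter_le_edgeFilter_iff.1 hu U hU
      exact ⟨a, heU ha, b, heU hb, heU hab⟩

end Schur

theorem dense_subtype_ultrafilter_iff {X : Type*} {p : Ultrafilter X → Prop}
    {s : Set {u : Ultrafilter X // p u}} :
    Dense s ↔ ∀ v : {u : Ultrafilter X // p u}, ∀ A ∈ v.1, ∃ w ∈ s, A ∈ w.1 := by
  rw [(ultrafilterBasis_is_basis.induced Subtype.val).dense_iff]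
  simp only [ultrafilterBasis, forall_mem_image, forall_mem_range]
  exact ⟨fun h v A hA => (h A ⟨v, hA⟩).imp fun w hw => ⟨hw.2, hw.1⟩,
    fun h A ⟨v, hA⟩ => (h v A hA).imp fun w hw => ⟨hw.2, hw.1⟩⟩

theorem mk_seq_set_le_continuum (X : Type u) [Countable X] : #(ℕ → Set X) ≤ 𝔠 :=
  calc #(ℕ → Set X) = (2 ^ #X) ^ ℵ₀ := by simp
    _ ≤ (2 ^ ℵ₀) ^ ℵ₀ := power_le_power_right (power_le_power_left two_ne_zero mk_le_aleph0)
    _ = 𝔠 := by rw [two_power_aleph0, continuum_power_aleph0]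

theorem continuum_le_aleph_one_of_CH (hCH : continuum.{w} = aleph 1) : continuum.{u} ≤ ℵ₁ := by
  have h : lift.{w} continuum.{u} = lift.{w} (aleph.{u} 1) := by
    simpa using congrArg lift.{u} hCH
  exact (lift_injective h).le

theorem schP_dense_of_CH_general {S : Type u} [Add S] [Countable S]
    (hCH : continuum.{w} = aleph 1) :
    Dense {v : {u : Ultrafilter S // IsFreeUltrafilter u ∧ IsSchurUltrafilter u} |
      IsPPoint v.1} := by
  refine dense_subtype_ultrafilter_iff.2 fun ⟨v, hv⟩ A hA => ?_
  have hlarge : ∃ᶠ x in edgeFilter (schurEdges S), x ∈ A :=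
    (Eventually.frequently hA).filter_mono (isFree_and_isSchur_iff_le_edgeFilter.1 hv)
  obtain ⟨u, hu, huA, huP⟩ := isPPlusFilter_edgeFilter.exists_isPPoint_le
    (edgeFilter_le_cofinite fun e he => he.1)
    ((mk_seq_set_le_continuum S).trans (continuum_le_aleph_one_of_CH hCH)) hlarge
  exact ⟨⟨u, isFree_and_isSchur_iff_le_edgeFilter.2 hu⟩, huP, huA⟩

/-- Under CH, the set `Sch^p(ℤ)` of free Schur ultrafilters on `ℤ` which are
P-points is dense in `Sch(ℤ)`. -/
theorem schP_dense_of_CH (hCH : Cardinal.continuum = Cardinal.aleph 1) :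
    Dense {v : SchZ | IsPPoint v.1} := by
  exact schP_dense_of_CH_general hCH
end

section
/- Let G be a countable commutative group and let u be a free Schur ultrafilter on G. Then u is not selective. -/
/-- An ultrafilter `u` on a countable set `X` is *selective* if for every partition
`{C n : n ∈ ℕ}` of `X` with `C n ∉ u` for all `n`, there exists `U ∈ u` such that
`U ∩ C n` has at most one element for every `n`. -/
def IsSelective {X : Type*} (u : Ultrafilter X) : Prop :=
  ∀ C : ℕ → Set X, (⋃ n, C n) = Set.univ →
    (Pairwise fun m n => Disjoint (C m) (C n)) →
    (∀ n, C n ∉ u) → ∃ U ∈ u, ∀ n, (U ∩ C n).Subsingleton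

/-!
Choose a rank `r : S → ℕ` with finite fibres for which, among `a`, `b` and `a + b`, no rank exceeds
the larger of the other two by more than one. A selective `u` contains a set on which distinct
elements have ranks differing by at least two. If `a`, `b` and `a + b` are distinct members of this
set, the largest of their three ranks is too large. Coincidences `a + b = a` and `a + b = b` occur
only at an idempotent, and there is at most one. If `a = b`, then doubling has to lower the rank of
`a`; as ranks are natural numbers, a two-colouring separates `x` from `x + x` whenever doubling
lowers the rank of `x`, and `u` contains one of the colour classes.
-/

open Set

open scoped Pointwise

section Ultrafilter

variable {X : Type*} {u : Ultrafilter X}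

theorem exists_preimage_singleton_mem_ultrafilter {κ : Type*} [Finite κ] (u : Ultrafilter X)
    (c : X → κ) : ∃ k, c ⁻¹' {k} ∈ u := by
  obtain ⟨k, hk⟩ := (u.map c).eq_pure_of_finite
  exact ⟨k, Ultrafilter.mem_map.1 (hk ▸ Ultrafilter.mem_pure.2 rfl)⟩

theorem IsSelective.exists_mem_injOn (hu : IsSelective u) {r : X → ℕ}
    (hr : ∀ n, r ⁻¹' {n} ∉ u) : ∃ U ∈ u, InjOn r U := by
  obtain ⟨U, hU, hUr⟩ := hu (fun n => r ⁻¹' {n}) (iUnion_eq_univ_iff.2 fun x => ⟨r x, rfl⟩)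
    (pairwise_disjoint_fiber r) hr
  exact ⟨U, hU, fun x hx y hy hxy => hUr (r y) ⟨hx, hxy⟩ ⟨hy, rfl⟩⟩

theorem IsSelective.exists_mem_pairwise_add_le (hu : IsSelective u) {r : X → ℕ}
    (hr : ∀ n, r ⁻¹' {n} ∉ u) (k : ℕ) [NeZero k] :
    ∃ U ∈ u, U.Pairwise fun x y => r x + k ≤ r y ∨ r y + k ≤ r x := by
  obtain ⟨U, hU, hinj⟩ := hu.exists_mem_injOn hr
  obtain ⟨i, hi⟩ := exists_preimage_singleton_mem_ultrafilter u fun x => (r x : ZMod k)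
  refine ⟨_, Filter.inter_mem hU hi, fun x ⟨hxU, hxi⟩ y ⟨hyU, hyi⟩ hxy => ?_⟩
  have hmod : r x ≡ r y [MOD k] := (ZMod.natCast_eq_natCast_iff _ _ _).1 (hxi.trans hyi.symm)
  exact (hinj.ne hxU hyU hxy).lt_or_gt.imp hmod.add_le_of_lt hmod.symm.add_le_of_lt

end Ultrafilter

section Exhaustion

variable {X : Type*}

/-- The increasing sequence of sets obtained from `∅` by adjoining to the `n`-th set `A` both
`T A` and the fibre of `e` over `n`. For an injective `e` and a finiteness-preserving `T`, it
exhausts `X` by finite sets. -/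
def exhaustion (e : X → ℕ) (T : Set X → Set X) : ℕ → Set X
  | 0 => ∅
  | n + 1 => exhaustion e T n ∪ (e ⁻¹' {n} ∪ T (exhaustion e T n))

theorem monotone_exhaustion (e : X → ℕ) (T : Set X → Set X) : Monotone (exhaustion e T) :=
  monotone_nat_of_le_succ fun _ => subset_union_left

theorem mem_exhaustion_succ (e : X → ℕ) (T : Set X → Set X) (x : X) :
    x ∈ exhaustion e T (e x + 1) :=
  Or.inr (Or.inl rfl)

theorem finite_exhaustion {e : X → ℕ} (he : e.Injective) {T : Set X → Set X}
    (hT : ∀ A : Set X, A.Finite → (T A).Finite) (n : ℕ) : (exhaustion e T n).Finite := by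
  induction n with
  | zero => exact finite_empty
  | succ n ih => exact ih.union (((finite_singleton n).preimage he.injOn).union (hT _ ih))

theorem exists_rank_le_succ [Countable X] {T : Set X → Set X}
    (hT : ∀ A : Set X, A.Finite → (T A).Finite) :
    ∃ r : X → ℕ, (∀ n, {x | r x ≤ n}.Finite) ∧ ∀ n, ∀ x ∈ T {y | r y ≤ n}, r x ≤ n + 1 := by
  classical
  obtain ⟨e, he⟩ := exists_injective_nat X
  have hex (x : X) : ∃ n, x ∈ exhaustion e T n := ⟨_, mem_exhaustion_succ e T x⟩
  have hrank (n : ℕ) : {x | Nat.find (hex x) ≤ n} = exhaustion e T n :=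
    Subset.antisymm (fun x hx => monotone_exhaustion e T hx (Nat.find_spec (hex x)))
      fun x hx => Nat.find_min' (hex x) hx
  refine ⟨fun x => Nat.find (hex x), fun n => ?_, fun n x hx => ?_⟩
  · rw [hrank]
    exact finite_exhaustion he hT n
  · rw [hrank] at hx
    exact Nat.find_min' (hex x) (Or.inr (Or.inr hx))

end Exhaustion

section Descent

variable {X : Type*} {r : X → ℕ} {f : X → X} {x : X}

/-- The parity (`true` for odd) of the number of steps for which the `f`-orbit of `x` strictly
lowers the rank `r` before it first fails to do so. -/
def descentParity (r : X → ℕ) (f : X → X) (x : X) : Bool :=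
  if r (f x) < r x then !descentParity r f (f x) else false
termination_by r x

theorem descentParity_apply_ne (h : r (f x) < r x) :
    descentParity r f (f x) ≠ descentParity r f x := by
  rw [descentParity.eq_def r f x, if_pos h]
  exact (Bool.not_ne_self _).symm

end Descent

section AddRank

variable {S : Type*}

/-- A rank function with finite sublevel sets for which, in every triple `a`, `b`, `a + b`, each
rank exceeds the maximum of the other two by at most one. -/
structure IsAddRank [Add S] (r : S → ℕ) : Prop where
  finite_setOf_le (n : ℕ) : {x | r x ≤ n}.Finite
  add_le (a b : S) : r (a + b) ≤ max (r a) (r b) + 1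
  left_le (a b : S) : r a ≤ max (r b) (r (a + b)) + 1
  right_le (a b : S) : r b ≤ max (r a) (r (a + b)) + 1

namespace IsAddRank

variable [Add S] {r : S → ℕ} {U : Set S} {a b : S}

theorem finite_preimage_singleton (hr : IsAddRank r) (n : ℕ) : (r ⁻¹' {n}).Finite :=
  (hr.finite_setOf_le n).subset fun _ hx => le_of_eq hx

theorem add_notMem_of_pairwise (hr : IsAddRank r)
    (hU : U.Pairwise fun x y => r x + 2 ≤ r y ∨ r y + 2 ≤ r x) (ha : a ∈ U) (hb : b ∈ U)
    (hab : a ≠ b) (hleft : a + b ≠ a) (hright : a + b ≠ b) : a + b ∉ U := by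
  intro hadd
  have gap_ab := hU ha hb hab
  have gap_left := hU hadd ha hleft
  have gap_right := hU hadd hb hright
  have := hr.add_le a b
  have := hr.left_le a b
  have := hr.right_le a b
  omega

theorem add_self_lt_of_pairwise (hr : IsAddRank r)
    (hU : U.Pairwise fun x y => r x + 2 ≤ r y ∨ r y + 2 ≤ r x) (ha : a ∈ U) (hadd : a + a ∈ U)
    (hne : a + a ≠ a) : r (a + a) < r a := by
  have gap := hU hadd ha hne
  have := hr.add_le a a
  omega

end IsAddRank

/-- The elements that complete two elements of `A` to a triple `a`, `b`, `a + b`. -/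
def addTripleCompletions [Add S] (A : Set S) : Set S :=
  (A + A) ∪ ((⋃ a ∈ A, (a + ·) ⁻¹' A) ∪ ⋃ b ∈ A, (· + b) ⁻¹' A)

theorem add_mem_addTripleCompletions [Add S] {A : Set S} {a b : S} (ha : a ∈ A) (hb : b ∈ A) :
    a + b ∈ addTripleCompletions A :=
  Or.inl (add_mem_add ha hb)

theorem left_mem_addTripleCompletions [Add S] {A : Set S} {a b : S} (hb : b ∈ A)
    (hadd : a + b ∈ A) : a ∈ addTripleCompletions A :=
  Or.inr (Or.inr (mem_biUnion hb hadd))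

theorem right_mem_addTripleCompletions [Add S] {A : Set S} {a b : S} (ha : a ∈ A)
    (hadd : a + b ∈ A) : b ∈ addTripleCompletions A :=
  Or.inr (Or.inl (mem_biUnion ha hadd))

theorem finite_addTripleCompletions [Add S] [IsCancelAdd S] {A : Set S} (hA : A.Finite) :
    (addTripleCompletions A).Finite :=
  (hA.add hA).union <|
    (hA.biUnion fun a _ => hA.preimage (add_right_injective a).injOn).union <|
      hA.biUnion fun b _ => hA.preimage (add_left_injective b).injOn

theorem exists_isAddRank (S : Type*) [Add S] [IsCancelAdd S] [Countable S] :
    ∃ r : S → ℕ, IsAddRank r := by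
  obtain ⟨r, hfin, hr⟩ :=
    exists_rank_le_succ (X := S) (T := addTripleCompletions) fun _ => finite_addTripleCompletions
  exact ⟨r,
    { finite_setOf_le := hfin
      add_le a b := hr _ _ (add_mem_addTripleCompletions (le_max_left (r a) (r b))
        (le_max_right (r a) (r b)))
      left_le a b := hr _ _ (left_mem_addTripleCompletions (le_max_left (r b) (r (a + b)))
        (le_max_right (r b) (r (a + b))))
      right_le a b := hr _ _ (right_mem_addTripleCompletions (le_max_left (r a) (r (a + b)))
        (le_max_right (r a) (r (a + b)))) }⟩

end AddRank

section Idempotent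

variable {S : Type*} [AddSemigroup S] {a b : S}

theorem add_self_eq_right_of_add_eq_left [IsLeftCancelAdd S] (h : a + b = a) : b + b = b :=
  add_left_cancel (a := a) (by rw [← add_assoc, h, h])

theorem add_self_eq_left_of_add_eq_right [IsRightCancelAdd S] (h : a + b = b) : a + a = a :=
  add_right_cancel (b := b) (by rw [add_assoc, h, h])

theorem subsingleton_setOf_add_self_eq [IsCancelAdd S] : {x : S | x + x = x}.Subsingleton := by
  intro a (ha : a + a = a) b (hb : b + b = b)
  have hright : a + b = b := add_left_cancel (a := a) (by rw [← add_assoc, ha])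
  have hleft : a + b = a := add_right_cancel (b := b) (by rw [add_assoc, hb])
  exact hleft.symm.trans hright

theorem IsFreeUltrafilter.setOf_add_self_ne_mem [IsCancelAdd S] {u : Ultrafilter S}
    (hu : IsFreeUltrafilter u) : {x : S | x + x ≠ x} ∈ u :=
  Ultrafilter.compl_mem_iff_notMem.2 fun h => hu _ h subsingleton_setOf_add_self_eq.finite

end Idempotent

theorem free_schur_not_selective_general {S : Type*} [AddSemigroup S] [IsCancelAdd S]
    [Countable S] (u : Ultrafilter S) (hfree : IsFreeUltrafilter u)
    (hschur : IsSchurUltrafilter u) : ¬ IsSelective u := by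
  intro hsel
  obtain ⟨r, hr⟩ := exists_isAddRank S
  obtain ⟨U, hU, hgap⟩ := hsel.exists_mem_pairwise_add_le
    (fun n hn => hfree _ hn (hr.finite_preimage_singleton n)) 2
  obtain ⟨p, hp⟩ := exists_preimage_singleton_mem_ultrafilter u (descentParity r fun x => x + x)
  obtain ⟨a, ⟨haU, hap, ha⟩, b, ⟨hbU, -, hb⟩, haddU, haddp, -⟩ :=
    hschur _ (Filter.inter_mem hU (Filter.inter_mem hp hfree.setOf_add_self_ne_mem))
  rcases eq_or_ne a b with rfl | hab
  · have hlt : r (a + a) < r a := hr.add_self_lt_of_pairwise hgap haU haddU ha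
    exact descentParity_apply_ne (f := fun x => x + x) hlt (haddp.trans hap.symm)
  · exact hr.add_notMem_of_pairwise hgap haU hbU hab
      (fun h => hb (add_self_eq_right_of_add_eq_left h))
      (fun h => ha (add_self_eq_left_of_add_eq_right h)) haddU

/-- A free Schur ultrafilter on a countable commutative group is not selective. -/
theorem free_schur_not_selective {G : Type*} [AddCommGroup G] [Countable G]
    (u : Ultrafilter G) (hfree : IsFreeUltrafilter u) (hschur : IsSchurUltrafilter u) :
    ¬ IsSelective u :=
  free_schur_not_selective_general u hfree hschur
end

section
/- Let S be a semigroup and let u be an ultrafilter on S. Then u·u = u if and only if for each U ∈ u there exist x ∈ U and V ∈ u such that x·V ⊆ U. -/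
attribute [local instance] Ultrafilter.mul

section Magma

variable {S : Type*} [Mul S]

theorem mem_ultrafilter_mul_iff_eventually {u v : Ultrafilter S} {A : Set S} :
    A ∈ u * v ↔ ∀ᶠ x in u, ∃ V ∈ v, ∀ y ∈ V, x * y ∈ A :=
  (Ultrafilter.eventually_mul u v (· ∈ A)).trans
    (Filter.eventually_congr (.of_forall fun _ => Filter.eventually_iff_exists_mem))

theorem ultrafilter_mul_eq_iff_frequently {u v w : Ultrafilter S} :
    u * v = w ↔ ∀ A ∈ w, ∃ᶠ x in u, ∃ V ∈ v, ∀ y ∈ V, x * y ∈ A := by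
  simp only [Ultrafilter.frequently_iff_eventually, ← mem_ultrafilter_mul_iff_eventually]
  exact Ultrafilter.coe_le_coe.symm

theorem idempotent_ultrafilter_iff_general (u v : Ultrafilter S) :
    u * v = u ↔ ∀ U ∈ u, ∃ x ∈ U, ∃ V ∈ v, ∀ y ∈ V, x * y ∈ U := by
  rw [ultrafilter_mul_eq_iff_frequently]
  constructor
  · intro translates_frequently U hU
    obtain ⟨x, ⟨V, hV, hxV⟩, hxU⟩ :=
      ((translates_frequently U hU).and_eventually hU).exists
    exact ⟨x, hxU, V, hV, hxV⟩
  · intro exists_translate U hU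
    refine Filter.frequently_iff.2 fun {W} hW => ?_
    -- Shrinking `U` to `U ∩ W` forces the translating element into `W`.
    obtain ⟨x, hx, V, hV, hxV⟩ := exists_translate (U ∩ W) (Filter.inter_mem hU hW)
    exact ⟨x, hx.2, V, hV, fun y hy => (hxV y hy).1⟩

end Magma

/-- An ultrafilter `u` on a semigroup `S` is idempotent (`u * u = u`, where the
product of ultrafilters is given by `A ∈ u * v ↔ {x | {y | x * y ∈ A} ∈ v} ∈ u`)
if and only if for each `U ∈ u` there exist `x ∈ U` and `V ∈ u` with `x • V ⊆ U`. -/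
theorem idempotent_ultrafilter_iff {S : Type*} [Semigroup S] (u : Ultrafilter S) :
    u * u = u ↔ ∀ U ∈ u, ∃ x ∈ U, ∃ V ∈ u, ∀ y ∈ V, x * y ∈ U :=
  idempotent_ultrafilter_iff_general u u
end

section
/- Let G be a countably infinite group and let u be a free idempotent ultrafilter on G. Then u is not a weak P-point; in fact, u lies in the closure (with respect to the Stone topology on the space of ultrafilters on G) of the countable set {x·u : x ∈ G} \ {u}, all of whose elements are free ultrafilters. -/
attribute [local instance] Ultrafilter.mul

/-- An ultrafilter `u` on a countable set `X` is a *weak P-point* if `u` is not in the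
closure (in the Stone topology) of any countable set of ultrafilters on `X` that
contains no principal ultrafilter and does not contain `u`. -/
def IsWeakPPoint {X : Type*} (u : Ultrafilter X) : Prop :=
  ∀ D : Set (Ultrafilter X), D.Countable → (∀ v ∈ D, ∀ x : X, v ≠ (pure x : Ultrafilter X)) →
    u ∉ D → u ∉ closure D

/-!
Every basic neighbourhood of `u = u * u` contains `x·u` for `u`-many `x`, so it is enough that
`x·u = u` for at most one `x`. If an injective `f` fixes `u`, then `f a = a` for `u`-many `a`: the
remaining points are covered by a set `A` disjoint from `f⁻¹' A` together with `f⁻¹' A` and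
`f '' A`, and none of these three sets belongs to `u`. If both `x·u = u` and `y·u = u`, then some
`a` satisfies `x * a = a = y * a`, and cancellation gives `x = y`.
-/

open Filter Function Set Topology

section FixedUltrafilters

variable {X : Type*}

theorem exists_maximal_disjoint_preimage (f : X → X) :
    ∃ A : Set X, Maximal (fun B ↦ Disjoint B (f ⁻¹' B)) A := by
  refine zorn_subset {B : Set X | Disjoint B (f ⁻¹' B)} fun c hc hchain ↦
    ⟨⋃₀ c, disjoint_left.2 ?_, fun _ ↦ subset_sUnion_of_mem⟩
  rintro a ⟨s, hs, has⟩ ⟨t, ht, hat⟩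
  obtain ⟨r, hr, hsr, htr⟩ := hchain.directedOn s hs t ht
  exact disjoint_left.1 (hc hr) (hsr has) (htr hat)

theorem exists_disjoint_preimage_cover (f : X → X) :
    ∃ A : Set X, Disjoint A (f ⁻¹' A) ∧ A ∪ f ⁻¹' A ∪ f '' A ∪ fixedPoints f = univ := by
  obtain ⟨A, hdisj, hmax⟩ := exists_maximal_disjoint_preimage f
  refine ⟨A, hdisj, eq_univ_of_forall fun a ↦ ?_⟩
  by_contra ha
  simp only [mem_union, not_or, mem_preimage, mem_fixedPoints, IsFixedPt] at ha
  obtain ⟨⟨⟨haA, hfaA⟩, haf⟩, hfix⟩ := ha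
  have hinsert : Disjoint (insert a A) (f ⁻¹' insert a A) := by
    rw [disjoint_left]
    rintro b (rfl | hb) (hfb | hfb)
    · exact hfix hfb
    · exact hfaA hfb
    · exact haf ⟨b, hb, hfb⟩
    · exact disjoint_left.1 hdisj hb hfb
  exact haA (hmax hinsert (subset_insert a A) (mem_insert a A))

theorem fixedPoints_mem_of_map_eq_self {f : X → X} (hf : Injective f) {u : Ultrafilter X}
    (hu : u.map f = u) : fixedPoints f ∈ u := by
  obtain ⟨A, hdisj, hcover⟩ := exists_disjoint_preimage_cover f
  have preimage_mem_iff (B : Set X) : f ⁻¹' B ∈ u ↔ B ∈ u := by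
    rw [← Ultrafilter.mem_map, hu]
  have image_mem_iff : f '' A ∈ u ↔ A ∈ u := by
    rw [← preimage_mem_iff, hf.preimage_image]
  have hA : A ∉ u := fun hA ↦
    Ultrafilter.empty_notMem (hdisj.inter_eq ▸ inter_mem hA ((preimage_mem_iff A).2 hA))
  have huniv : A ∪ f ⁻¹' A ∪ f '' A ∪ fixedPoints f ∈ u := hcover ▸ univ_mem
  simpa only [Ultrafilter.union_mem_iff, preimage_mem_iff, image_mem_iff, hA, false_or] using huniv

end FixedUltrafilters

namespace IsFreeUltrafilter

variable {X Y : Type*} {u : Ultrafilter X}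

theorem ne_pure (hu : IsFreeUltrafilter u) (x : X) : u ≠ pure x := by
  rintro rfl
  exact hu {x} (Ultrafilter.mem_pure.2 rfl) (finite_singleton x)

theorem compl_mem (hu : IsFreeUltrafilter u) {A : Set X} (hA : A.Finite) : Aᶜ ∈ u :=
  Ultrafilter.compl_mem_iff_notMem.2 fun hmem ↦ hu A hmem hA

theorem map (hu : IsFreeUltrafilter u) {f : X → Y} (hf : Injective f) :
    IsFreeUltrafilter (u.map f) :=
  fun _ hA hfin ↦ hu _ hA (hfin.preimage hf.injOn)

end IsFreeUltrafilter

section Translates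

variable {M : Type*} [Mul M]

theorem pure_mul_eq_map (x : M) (u : Ultrafilter M) : pure x * u = u.map (x * ·) := rfl

theorem tendsto_pure_mul (u v : Ultrafilter M) :
    Tendsto (fun x ↦ (pure x : Ultrafilter M) * v) u (𝓝 (u * v)) :=
  ((Ultrafilter.continuous_mul_left v).tendsto u).comp u.tendsto_pure_self

theorem subsingleton_setOf_pure_mul_eq_self [IsCancelMul M] (u : Ultrafilter M) :
    {x : M | pure x * u = u}.Subsingleton := by
  have fixed_mem {x : M} (hx : pure x * u = u) : fixedPoints (x * ·) ∈ u :=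
    fixedPoints_mem_of_map_eq_self (mul_right_injective x) (pure_mul_eq_map x u ▸ hx)
  intro x hx y hy
  obtain ⟨a, hxa, hya⟩ := u.nonempty_of_mem (inter_mem (fixed_mem hx) (fixed_mem hy))
  exact mul_right_cancel (hxa.trans hya.symm)

theorem mem_closure_translates_sdiff_self [IsCancelMul M] {u : Ultrafilter M}
    (hfree : IsFreeUltrafilter u) (hidem : u * u = u) :
    u ∈ closure ({v | ∃ x : M, v = pure x * u} \ {u}) := by
  have hne : ∀ᶠ x in u, pure x * u ≠ u :=
    hfree.compl_mem (subsingleton_setOf_pure_mul_eq_self u).finite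
  have htendsto : Tendsto (fun x ↦ (pure x : Ultrafilter M) * u) u (𝓝 u) := by
    simpa only [hidem] using tendsto_pure_mul u u
  exact mem_closure_of_tendsto htendsto (hne.mono fun x hx ↦ ⟨⟨x, rfl⟩, hx⟩)

theorem countable_translates [Countable M] (u : Ultrafilter M) :
    {v | ∃ x : M, v = pure x * u}.Countable := by
  simpa only [range, eq_comm] using countable_range fun x : M ↦ (pure x : Ultrafilter M) * u

end Translates

theorem free_idempotent_not_weakPPoint_general {M : Type*} [Mul M] [IsCancelMul M] [Countable M]
    (u : Ultrafilter M) (hfree : IsFreeUltrafilter u) (hidem : u * u = u) :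
    letI C : Set (Ultrafilter M) := {v | ∃ x : M, v = (pure x : Ultrafilter M) * u} \ {u}
    C.Countable ∧ (∀ v ∈ C, IsFreeUltrafilter v) ∧ u ∈ closure C ∧ ¬ IsWeakPPoint u := by
  set C : Set (Ultrafilter M) := {v | ∃ x : M, v = pure x * u} \ {u}
  have hcount : C.Countable := (countable_translates u).mono sdiff_subset
  have hC_free : ∀ v ∈ C, IsFreeUltrafilter v := by
    rintro _ ⟨⟨x, rfl⟩, -⟩
    exact hfree.map (mul_right_injective x)
  have hclosure : u ∈ closure C := mem_closure_translates_sdiff_self hfree hidem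
  have hu_notMem : u ∉ C := fun hu ↦ hu.2 rfl
  exact ⟨hcount, hC_free, hclosure, fun hweak ↦
    hweak C hcount (fun v hv ↦ (hC_free v hv).ne_pure) hu_notMem hclosure⟩

/-- A free idempotent ultrafilter `u` on a countably infinite group is not a weak
P-point: indeed, `u` lies in the closure of the countable set `{x • u : x ∈ G} \ {u}`,
all of whose elements are free ultrafilters. -/
theorem free_idempotent_not_weakPPoint {G : Type*} [Group G] [Countable G] [Infinite G]
    (u : Ultrafilter G) (hfree : IsFreeUltrafilter u) (hidem : u * u = u) :
    letI C : Set (Ultrafilter G) := {v | ∃ x : G, v = (pure x : Ultrafilter G) * u} \ {u}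
    C.Countable ∧ (∀ v ∈ C, IsFreeUltrafilter v) ∧ u ∈ closure C ∧ ¬ IsWeakPPoint u :=
  free_idempotent_not_weakPPoint_general u hfree hidem
end
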